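/- arXiv:1205.2995 — 7 statements merged into one kernel-verified Lean document; each statement's English description precedes it below -/
import Mathlib

section
/- For every integer q ≥ 1, every interval [a,b] with a < b, and every bounded integrable function v : [a,b] → ℝ, there exists a unique polynomial p of degree at most q such that p(a) = v(a), p(b) = v(b), and ∫_a^b (v − p)·w dx = 0 for every polynomial w of degree at most q − 2 (the last condition being vacuous for q = 1). -/
open MeasureTheory

/-!
Taking the values at `a` and `b` together with the `L²` pairings against polynomials of degree at
most `q - 2` is a linear map between spaces of the same dimension `q + 1`, so it is bijective as
soon as it is injective. A polynomial in its kernel has the form `(X - a) (X - b) r` with `r` an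
admissible test polynomial. Testing against `r` itself gives `∫ (x - a) (x - b) r² = 0`, and since
the weight has constant sign on the interval, `r = 0`.
-/

namespace ContinuousGalerkin

open Polynomial

theorem X_sub_C_mul_X_sub_C_dvd_of_eval_eq_zero {K : Type*} [Field K] {a b : K} (hab : a ≠ b)
    {p : K[X]} (ha : p.eval a = 0) (hb : p.eval b = 0) : (X - C a) * (X - C b) ∣ p :=
  (isCoprime_X_sub_C_of_isUnit_sub (sub_ne_zero.mpr hab).isUnit).mul_dvd
    (dvd_iff_isRoot.mpr ha) (dvd_iff_isRoot.mpr hb)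

theorem mem_degreeLT_of_monic_mul_mem {R : Type*} [Semiring R] {f r : R[X]} (hf : f.Monic) {n : ℕ}
    (h : f * r ∈ degreeLT R (n + f.natDegree)) : r ∈ degreeLT R n := by
  rcases eq_or_ne r 0 with rfl | hr
  · exact zero_mem _
  rw [mem_degreeLT, ← natDegree_lt_iff_degree_lt (hf.mul_right_ne_zero hr),
    hf.natDegree_mul' hr, add_comm, add_lt_add_iff_right] at h
  exact mem_degreeLT.mpr ((natDegree_lt_iff_degree_lt hr).mp h)

theorem mem_degreeLT_succ_iff_natDegree_le {R : Type*} [Semiring R] {p : R[X]} {n : ℕ} :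
    p ∈ degreeLT R (n + 1) ↔ p.natDegree ≤ n := by
  rw [degreeLT_succ_eq_degreeLE, mem_degreeLE, natDegree_le_iff_degree_le]

theorem domRestrict_degreeLT_eq_iff {R M : Type*} [Semiring R] [AddCommMonoid M] [Module R M]
    {f g : R[X] →ₗ[R] M} {n : ℕ} :
    f.domRestrict (degreeLT R n) = g.domRestrict (degreeLT R n) ↔
      ∀ w : R[X], w.natDegree < n → f w = g w := by
  refine ⟨fun h w hw => ?_, fun h => LinearMap.ext fun ⟨w, hw⟩ => ?_⟩
  · exact LinearMap.congr_fun h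
      ⟨w, mem_degreeLT.mpr (degree_le_natDegree.trans_lt (by exact_mod_cast hw))⟩
  · rcases eq_or_ne w 0 with rfl | hw0
    · simp
    · exact h w ((natDegree_lt_iff_degree_lt hw0).mpr (mem_degreeLT.mp hw))

theorem sub_mul_sub_nonpos_of_mem_uIcc {R : Type*} [Ring R] [LinearOrder R] [IsOrderedRing R]
    {a b x : R} (hx : x ∈ Set.uIcc a b) : (x - a) * (x - b) ≤ 0 := by
  rcases Set.mem_uIcc.mp hx with ⟨hax, hxb⟩ | ⟨hbx, hxa⟩
  · exact mul_nonpos_of_nonneg_of_nonpos (sub_nonneg.mpr hax) (sub_nonpos.mpr hxb)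
  · exact mul_nonpos_of_nonpos_of_nonneg (sub_nonpos.mpr hxa) (sub_nonneg.mpr hbx)

section Positivity

variable {a b : ℝ}

theorem integral_eval_pos (hab : a < b) {p : ℝ[X]} (hp : p ≠ 0)
    (hnonneg : ∀ x ∈ Set.Icc a b, 0 ≤ p.eval x) : 0 < ∫ x in a..b, p.eval x := by
  obtain ⟨c, hc, hpc⟩ : ∃ c ∈ Set.Icc a b, p.eval c ≠ 0 := by
    by_contra! hzero
    exact hp (p.eq_zero_of_infinite_isRoot ((Set.Icc_infinite hab).mono hzero))
  exact intervalIntegral.integral_pos hab p.continuousOn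
    (fun x hx => hnonneg x (Set.Ioc_subset_Icc_self hx)) ⟨c, hc, (hnonneg c hc).lt_of_ne' hpc⟩

theorem integral_eval_ne_zero (hab : a ≠ b) {p : ℝ[X]} (hp : p ≠ 0)
    (hnonneg : ∀ x ∈ Set.uIcc a b, 0 ≤ p.eval x) : ∫ x in a..b, p.eval x ≠ 0 := by
  rcases hab.lt_or_gt with hlt | hgt
  · exact (integral_eval_pos hlt hp (Set.uIcc_of_lt hlt ▸ hnonneg)).ne'
  · rw [intervalIntegral.integral_symm, neg_ne_zero]
    exact (integral_eval_pos hgt hp (Set.uIcc_of_gt hgt ▸ hnonneg)).ne'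

theorem integral_X_sub_C_mul_X_sub_C_mul_sq_ne_zero (hab : a ≠ b) {r : ℝ[X]} (hr : r ≠ 0) :
    ∫ x in a..b, ((X - C a) * (X - C b) * r).eval x * r.eval x ≠ 0 := by
  let p : ℝ[X] := -((X - C a) * (X - C b) * r * r)
  have hp : p ≠ 0 := neg_ne_zero.mpr <| mul_ne_zero
    (mul_ne_zero (mul_ne_zero (X_sub_C_ne_zero a) (X_sub_C_ne_zero b)) hr) hr
  have hnonneg : ∀ x ∈ Set.uIcc a b, 0 ≤ p.eval x := fun x hx => by
    have hsq := mul_nonpos_of_nonpos_of_nonneg (sub_mul_sub_nonpos_of_mem_uIcc hx)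
      (mul_self_nonneg (r.eval x))
    simpa [p, mul_assoc] using hsq
  simpa [p] using integral_eval_ne_zero hab hp hnonneg

end Positivity

section Pairing

variable {a b : ℝ}

/-- The linear functional `w ↦ ∫ₐᵇ f w` on polynomials, that is, the `L²` pairing with an integrable
function `f`. Integrability is an argument because the junk value `0` of a divergent integral would
break additivity. -/
noncomputable def l2Functional {f : ℝ → ℝ} (hf : IntervalIntegrable f volume a b) :
    Module.Dual ℝ ℝ[X] where
  toFun w := ∫ x in a..b, f x * w.eval x
  map_add' w₁ w₂ := by
    simp only [eval_add, mul_add]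
    exact intervalIntegral.integral_add (hf.mul_continuousOn w₁.continuousOn)
      (hf.mul_continuousOn w₂.continuousOn)
  map_smul' c w := by
    simp only [eval_smul, smul_eq_mul, mul_left_comm _ c, intervalIntegral.integral_const_mul,
      RingHom.id_apply]

theorem l2Functional_apply {f : ℝ → ℝ} (hf : IntervalIntegrable f volume a b) (w : ℝ[X]) :
    l2Functional hf w = ∫ x in a..b, f x * w.eval x := rfl

theorem l2Functional_sub_apply {f g : ℝ → ℝ} (hf : IntervalIntegrable f volume a b)
    (hg : IntervalIntegrable g volume a b) (w : ℝ[X]) :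
    l2Functional hf w - l2Functional hg w = ∫ x in a..b, (f x - g x) * w.eval x := by
  simp only [sub_mul]
  exact (intervalIntegral.integral_sub (hf.mul_continuousOn w.continuousOn)
    (hg.mul_continuousOn w.continuousOn)).symm

theorem intervalIntegrable_eval (p : ℝ[X]) (a b : ℝ) :
    IntervalIntegrable (fun x => p.eval x) volume a b :=
  p.continuous.intervalIntegrable a b

theorem l2Functional_eval_comm (p w : ℝ[X]) :
    l2Functional (intervalIntegrable_eval p a b) w =
      l2Functional (intervalIntegrable_eval w a b) p := by
  simp only [l2Functional_apply, mul_comm]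

/-- The `L²` bilinear form `(p, w) ↦ ∫ₐᵇ p w` on polynomials. -/
noncomputable def l2Form (a b : ℝ) : LinearMap.BilinForm ℝ ℝ[X] where
  toFun p := l2Functional (intervalIntegrable_eval p a b)
  map_add' p₁ p₂ := LinearMap.ext fun w => by
    simp only [LinearMap.add_apply, l2Functional_eval_comm _ w, map_add]
  map_smul' c p := LinearMap.ext fun w => by
    simp only [LinearMap.smul_apply, l2Functional_eval_comm _ w, map_smul, RingHom.id_apply]

end Pairing

section DegreesOfFreedom

variable {a b : ℝ} {n : ℕ}

/-- The degrees of freedom of the interpolant `π_cG^[q]`, with `q = n + 1`: the endpoint values of a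
polynomial of degree at most `q`, and its `L²` pairing with polynomials of degree at most `q - 2`.
In terms of `degreeLT`, the latter space is `{0}` when `q = 1`. -/
noncomputable def degreesOfFreedom (a b : ℝ) (n : ℕ) :
    degreeLT ℝ (n + 2) →ₗ[ℝ] ℝ × ℝ × Module.Dual ℝ (degreeLT ℝ n) :=
  ((leval a).domRestrict _).prod
    (((leval b).domRestrict _).prod ((l2Form a b).domRestrict₁₂ _ (degreeLT ℝ n)))

theorem degreesOfFreedom_apply (p : degreeLT ℝ (n + 2)) :
    degreesOfFreedom a b n p =
      ((p : ℝ[X]).eval a, (p : ℝ[X]).eval b,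
        (l2Functional (intervalIntegrable_eval (p : ℝ[X]) a b)).domRestrict (degreeLT ℝ n)) := rfl

theorem degreesOfFreedom_injective (hab : a ≠ b) :
    Function.Injective (degreesOfFreedom a b n) := by
  rw [injective_iff_map_eq_zero]
  rintro ⟨p, hp⟩ hdof
  rw [degreesOfFreedom_apply, Prod.mk_eq_zero, Prod.mk_eq_zero] at hdof
  obtain ⟨ha, hb, horth⟩ := hdof
  obtain ⟨r, rfl⟩ := X_sub_C_mul_X_sub_C_dvd_of_eval_eq_zero hab ha hb
  have hdegree : ((X - C a) * (X - C b)).natDegree = 2 := by compute_degree!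
  have hr_mem : r ∈ degreeLT ℝ n :=
    mem_degreeLT_of_monic_mul_mem ((monic_X_sub_C a).mul (monic_X_sub_C b)) (hdegree ▸ hp)
  have hr : r = 0 := by
    by_contra hr
    exact integral_X_sub_C_mul_X_sub_C_mul_sq_ne_zero hab hr
      (LinearMap.congr_fun horth ⟨r, hr_mem⟩)
  simp [hr]

theorem degreesOfFreedom_bijective (hab : a ≠ b) :
    Function.Bijective (degreesOfFreedom a b n) := by
  have hfinite (m : ℕ) : FiniteDimensional ℝ (degreeLT ℝ m) :=
    Module.Finite.equiv (degreeLTEquiv ℝ m).symm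
  have hfinrank (m : ℕ) : Module.finrank ℝ (degreeLT ℝ m) = m := by
    simp [(degreeLTEquiv ℝ m).finrank_eq]
  have hdim : Module.finrank ℝ (degreeLT ℝ (n + 2)) =
      Module.finrank ℝ (ℝ × ℝ × Module.Dual ℝ (degreeLT ℝ n)) := by
    simp only [Module.finrank_prod, Module.finrank_self, Subspace.dual_finrank_eq, hfinrank]
    omega
  have hinj := degreesOfFreedom_injective (n := n) hab
  exact ⟨hinj, (LinearMap.injective_iff_surjective_of_finrank_eq_finrank hdim).mp hinj⟩

theorem degreesOfFreedom_eq_iff {v : ℝ → ℝ} (hv : IntervalIntegrable v volume a b)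
    {α β : ℝ} (p : degreeLT ℝ (n + 2)) :
    degreesOfFreedom a b n p = (α, β, (l2Functional hv).domRestrict (degreeLT ℝ n)) ↔
      (p : ℝ[X]).eval a = α ∧ (p : ℝ[X]).eval b = β ∧
        ∀ w : ℝ[X], w.natDegree < n → ∫ x in a..b, (v x - (p : ℝ[X]).eval x) * w.eval x = 0 := by
  simp only [degreesOfFreedom_apply, Prod.mk.injEq, eq_comm (b := (l2Functional hv).domRestrict _),
    domRestrict_degreeLT_eq_iff, ← l2Functional_sub_apply hv (intervalIntegrable_eval _ a b),
    sub_eq_zero]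

end DegreesOfFreedom

end ContinuousGalerkin

open ContinuousGalerkin in
theorem cG_interpolant_existsUnique_general (q : ℕ) (hq : 1 ≤ q) (a b : ℝ) (hab : a ≠ b)
    (v : ℝ → ℝ) (hvint : IntervalIntegrable v volume a b) :
    ∃! p : Polynomial ℝ, p.natDegree ≤ q ∧ p.eval a = v a ∧ p.eval b = v b ∧
      ∀ w : Polynomial ℝ, w.natDegree + 2 ≤ q →
        (∫ x in a..b, (v x - p.eval x) * w.eval x) = 0 := by
  obtain ⟨n, rfl⟩ := Nat.exists_eq_add_of_le' hq
  have htest (w : Polynomial ℝ) : w.natDegree + 2 ≤ n + 1 ↔ w.natDegree < n := by omega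
  simp only [← mem_degreeLT_succ_iff_natDegree_le, htest]
  obtain ⟨p, hp, hunique⟩ := (degreesOfFreedom_bijective hab).existsUnique
    (v a, v b, (l2Functional hvint).domRestrict (Polynomial.degreeLT ℝ n))
  refine ⟨p, ⟨p.2, (degreesOfFreedom_eq_iff hvint p).mp hp⟩, fun r ⟨hr, hinterp⟩ => ?_⟩
  exact congrArg Subtype.val (hunique ⟨r, hr⟩ ((degreesOfFreedom_eq_iff hvint ⟨r, hr⟩).mpr hinterp))

/-- Existence and uniqueness of the continuous Galerkin interpolant `π_cG^[q] v`:
for `q ≥ 1`, `a < b` and every bounded integrable `v : [a,b] → ℝ` there is a unique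
polynomial `p` of degree at most `q` with `p a = v a`, `p b = v b` and
`∫_a^b (v - p) w = 0` for every polynomial `w` of degree at most `q - 2`
(a vacuous condition when `q = 1`). -/
theorem cG_interpolant_existsUnique (q : ℕ) (hq : 1 ≤ q) (a b : ℝ) (hab : a < b)
    (v : ℝ → ℝ) (hvint : IntervalIntegrable v volume a b)
    (hvbdd : ∃ M : ℝ, ∀ x ∈ Set.Icc a b, |v x| ≤ M) :
    ∃! p : Polynomial ℝ, p.natDegree ≤ q ∧ p.eval a = v a ∧ p.eval b = v b ∧
      ∀ w : Polynomial ℝ, w.natDegree + 2 ≤ q →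
        (∫ x in a..b, (v x - p.eval x) * w.eval x) = 0 :=
  cG_interpolant_existsUnique_general q hq a b hab.ne v hvint
end

section
/- For every integer q ≥ 0, every interval [a,b] with a < b, and every bounded integrable function v : [a,b] → ℝ, there exists a unique polynomial p of degree at most q such that p(b) = v(b) and ∫_a^b (v − p)·w dx = 0 for every polynomial w of degree at most q − 1 (the last condition being vacuous for q = 0). -/
open MeasureTheory

open Polynomial Module

/-!
Let `c` lie outside the open interval `(a, b)`. If `p` has degree at most `q`, vanishes at `c` and
is orthogonal on `[a, b]` to every polynomial of degree less than `q`, then `p = (x - c) r` with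
`deg r < q`, and testing against `r` gives `∫ (x - c) r² = 0`. As `x - c` has constant sign on
`[a, b]`, this forces `r = 0`. Hence the linear map sending `p` to the pair of `p(c)` and the
functional `w ↦ ∫ p w` is injective, and so bijective, since its domain and codomain both have
dimension `q + 1`.
-/

section DegreeLT

variable {R : Type*}

theorem mem_degreeLT_succ_iff_natDegree_le [Semiring R] {n : ℕ} {p : R[X]} :
    p ∈ degreeLT R (n + 1) ↔ p.natDegree ≤ n := by
  rw [degreeLT_succ_eq_degreeLE, mem_degreeLE, natDegree_le_iff_degree_le]

theorem finrank_degreeLT [Semiring R] [StrongRankCondition R] (n : ℕ) :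
    finrank R (degreeLT R n) = n := by
  rw [(degreeLTEquiv R n).finrank_eq, finrank_fin_fun]

theorem dualRestrict_degreeLT_eq_iff [CommSemiring R] {n : ℕ} {f g : Dual R R[X]} :
    (degreeLT R n).dualRestrict f = (degreeLT R n).dualRestrict g ↔
      ∀ w : R[X], w.natDegree < n → f w = g w := by
  simp only [LinearMap.ext_iff, Subtype.forall, Submodule.dualRestrict_apply]
  refine forall_congr' fun w => ?_
  rcases eq_or_ne w 0 with rfl | hw
  · simp only [map_zero, implies_true]
  · rw [mem_degreeLT, natDegree_lt_iff_degree_lt hw]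

end DegreeLT

section LinearFunctional

variable {R K : Type*} [CommRing R] [Field K]

theorem eq_zero_of_isRoot_of_forall_mul_eq_zero [IsDomain R] {L : Dual R R[X]} {c : R}
    (hL : ∀ r : R[X], L ((X - C c) * r * r) = 0 → r = 0) {q : ℕ} {p : R[X]}
    (hdeg : p.natDegree ≤ q) (hroot : p.IsRoot c)
    (horth : ∀ w : R[X], w.natDegree < q → L (p * w) = 0) : p = 0 := by
  obtain ⟨r, rfl⟩ := dvd_iff_isRoot.mpr hroot
  by_contra hne
  have hr : r ≠ 0 := right_ne_zero_of_mul hne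
  have hrdeg : r.natDegree < q := by
    rw [natDegree_mul (X_sub_C_ne_zero c) hr, natDegree_X_sub_C] at hdeg
    omega
  exact hr (hL r (horth r hrdeg))

/-- The linear map `p ↦ (p(c), w ↦ L (p w))` on polynomials `p` of degree at most `q`, where `w`
ranges over the polynomials of degree less than `q`. Interpolating at `c` with prescribed moments
with respect to `L` means inverting this map. Degree bounds are encoded by `Polynomial.degreeLT`,
so that the space of test polynomials is zero when `q = 0`. -/
noncomputable def evalMomentMap (L : Dual R R[X]) (c : R) (q : ℕ) :
    degreeLT R (q + 1) →ₗ[R] R × Dual R (degreeLT R q) :=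
  ((leval c).prod ((degreeLT R q).dualRestrict ∘ₗ (LinearMap.mul R R[X]).compr₂ L)).domRestrict
    (degreeLT R (q + 1))

theorem evalMomentMap_eq_iff {L : Dual R R[X]} {c : R} {q : ℕ} {p : degreeLT R (q + 1)} {y : R}
    {l : Dual R R[X]} :
    evalMomentMap L c q p = (y, (degreeLT R q).dualRestrict l) ↔
      (p : R[X]).eval c = y ∧ ∀ w : R[X], w.natDegree < q → L (p * w) = l w :=
  Prod.ext_iff.trans (and_congr Iff.rfl dualRestrict_degreeLT_eq_iff)

theorem evalMomentMap_bijective {L : Dual K K[X]} {c : K}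
    (hL : ∀ r : K[X], L ((X - C c) * r * r) = 0 → r = 0) (q : ℕ) :
    Function.Bijective (evalMomentMap L c q) := by
  have hinj : Function.Injective (evalMomentMap L c q) := by
    rw [injective_iff_map_eq_zero]
    intro p hp
    rw [← Prod.mk_zero_zero, ← map_zero (degreeLT K q).dualRestrict, evalMomentMap_eq_iff] at hp
    exact Subtype.ext (eq_zero_of_isRoot_of_forall_mul_eq_zero hL
      (mem_degreeLT_succ_iff_natDegree_le.mp p.2) hp.1 hp.2)
  have hdim : finrank K (degreeLT K (q + 1)) = finrank K (K × Dual K (degreeLT K q)) := by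
    rw [finrank_prod, Subspace.dual_finrank_eq, finrank_self, finrank_degreeLT, finrank_degreeLT,
      add_comm]
  exact ⟨hinj, (LinearMap.injective_iff_surjective_of_finrank_eq_finrank hdim).mp hinj⟩

theorem existsUnique_natDegree_le_eval_eq_forall_mul_eq {L : Dual K K[X]} {c : K}
    (hL : ∀ r : K[X], L ((X - C c) * r * r) = 0 → r = 0) (q : ℕ) (y : K) (l : Dual K K[X]) :
    ∃! p : K[X], p.natDegree ≤ q ∧ p.eval c = y ∧
      ∀ w : K[X], w.natDegree < q → L (p * w) = l w := by
  obtain ⟨p, hp, hunique⟩ :=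
    (evalMomentMap_bijective hL q).existsUnique (y, (degreeLT K q).dualRestrict l)
  refine ⟨p, ⟨mem_degreeLT_succ_iff_natDegree_le.mp p.2, evalMomentMap_eq_iff.mp hp⟩, ?_⟩
  rintro p' ⟨hdeg, hp'⟩
  exact congrArg Subtype.val
    (hunique ⟨p', mem_degreeLT_succ_iff_natDegree_le.mpr hdeg⟩ (evalMomentMap_eq_iff.mpr hp'))

end LinearFunctional

section Integral

variable {a b : ℝ}

theorem eq_zero_of_integral_eval_eq_zero (hab : a < b) {p : ℝ[X]}
    (hp : ∀ x ∈ Set.Icc a b, 0 ≤ p.eval x) (hint : ∫ x in a..b, p.eval x = 0) : p = 0 := by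
  refine p.eq_zero_of_infinite_isRoot ((Set.Icc_infinite hab).mono fun x hx => ?_)
  by_contra hne
  have hpos : 0 < ∫ x in a..b, p.eval x :=
    intervalIntegral.integral_pos hab p.continuousOn
      (fun x hx => hp x (Set.Ioc_subset_Icc_self hx)) ⟨x, hx, (hp x hx).lt_of_ne' hne⟩
  exact hpos.ne' hint

theorem eq_zero_of_integral_X_sub_C_mul_mul_self_eq_zero (hab : a < b) {c : ℝ}
    (hc : c ∉ Set.Ioo a b) {r : ℝ[X]}
    (hint : ∫ x in a..b, ((X - C c) * r * r).eval x = 0) : r = 0 := by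
  have heval (x : ℝ) : ((X - C c) * r * r).eval x = (x - c) * (r.eval x * r.eval x) := by
    simp only [eval_mul, eval_sub, eval_X, eval_C, mul_assoc]
  suffices h : (X - C c) * r * r = 0 by
    simpa only [mul_eq_zero, X_sub_C_ne_zero, false_or, or_self] using h
  rcases le_or_gt c a with hca | hac
  · refine eq_zero_of_integral_eval_eq_zero hab (fun x hx => ?_) hint
    rw [heval]
    exact mul_nonneg (sub_nonneg.mpr (hca.trans hx.1)) (mul_self_nonneg _)
  · have hbc : b ≤ c := not_lt.mp fun hcb => hc ⟨hac, hcb⟩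
    refine neg_eq_zero.mp (eq_zero_of_integral_eval_eq_zero hab (fun x hx => ?_) ?_)
    · rw [eval_neg, heval, neg_nonneg]
      exact mul_nonpos_of_nonpos_of_nonneg (sub_nonpos.mpr (hx.2.trans hbc)) (mul_self_nonneg _)
    · simp only [eval_neg, intervalIntegral.integral_neg, hint, neg_zero]

theorem intervalIntegrable_mul_eval {v : ℝ → ℝ} (hv : IntervalIntegrable v volume a b)
    (w : ℝ[X]) : IntervalIntegrable (fun x => v x * w.eval x) volume a b :=
  hv.mul_continuousOn w.continuousOn

/-- The moment functional `w ↦ ∫ x in a..b, v x * w x` of a density `v`, as a linear functional on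
polynomials. Integrability of `v` is an argument because linearity depends on it. -/
noncomputable def momentFunctional {v : ℝ → ℝ} (hv : IntervalIntegrable v volume a b) :
    Dual ℝ ℝ[X] where
  toFun w := ∫ x in a..b, v x * w.eval x
  map_add' w w' := by
    simp only [eval_add, mul_add]
    exact intervalIntegral.integral_add (intervalIntegrable_mul_eval hv w)
      (intervalIntegrable_mul_eval hv w')
  map_smul' k w := by
    simp only [eval_smul, smul_eq_mul, mul_left_comm _ k, intervalIntegral.integral_const_mul,
      RingHom.id_apply]

/-- The integral over `[a, b]` as a linear functional on polynomials: the moment functional of the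
constant density `1`. -/
noncomputable def integralFunctional (a b : ℝ) : Dual ℝ ℝ[X] :=
  momentFunctional (a := a) (b := b) (v := fun _ => 1) intervalIntegrable_const

theorem integralFunctional_apply (p : ℝ[X]) :
    integralFunctional a b p = ∫ x in a..b, p.eval x := by
  simp only [integralFunctional, momentFunctional, LinearMap.coe_mk, AddHom.coe_mk, one_mul]

theorem integral_sub_eval_mul_eval_eq {v : ℝ → ℝ} (hv : IntervalIntegrable v volume a b)
    (p w : ℝ[X]) :
    ∫ x in a..b, (v x - p.eval x) * w.eval x =
      momentFunctional hv w - integralFunctional a b (p * w) := by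
  simp only [integralFunctional_apply, sub_mul, eval_mul]
  exact intervalIntegral.integral_sub (intervalIntegrable_mul_eval hv w)
    (intervalIntegrable_mul_eval (p.continuous.intervalIntegrable a b) w)

end Integral

theorem dG_interpolant_existsUnique_general (q : ℕ) {a b c : ℝ} (hab : a < b)
    (hc : c ∉ Set.Ioo a b) (y : ℝ) {v : ℝ → ℝ} (hv : IntervalIntegrable v volume a b) :
    ∃! p : ℝ[X], p.natDegree ≤ q ∧ p.eval c = y ∧
      ∀ w : ℝ[X], w.natDegree + 1 ≤ q →
        (∫ x in a..b, (v x - p.eval x) * w.eval x) = 0 := by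
  have hdefinite (r : ℝ[X]) (hr : integralFunctional a b ((X - C c) * r * r) = 0) : r = 0 :=
    eq_zero_of_integral_X_sub_C_mul_mul_self_eq_zero hab hc
      ((integralFunctional_apply _).symm.trans hr)
  simpa only [integral_sub_eval_mul_eval_eq hv, sub_eq_zero, Nat.add_one_le_iff,
    eq_comm (a := momentFunctional hv _)] using
    existsUnique_natDegree_le_eval_eq_forall_mul_eq hdefinite q y (momentFunctional hv)

/-- Existence and uniqueness of the discontinuous Galerkin interpolant `π_dG^[q] v`:
for `q ≥ 0`, `a < b` and every bounded integrable `v : [a,b] → ℝ` there is a unique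
polynomial `p` of degree at most `q` with `p b = v b` and
`∫_a^b (v - p) w = 0` for every polynomial `w` of degree at most `q - 1`
(a vacuous condition when `q = 0`). -/
theorem dG_interpolant_existsUnique (q : ℕ) (a b : ℝ) (hab : a < b)
    (v : ℝ → ℝ) (hvint : IntervalIntegrable v volume a b)
    (hvbdd : ∃ M : ℝ, ∀ x ∈ Set.Icc a b, |v x| ≤ M) :
    ∃! p : Polynomial ℝ, p.natDegree ≤ q ∧ p.eval b = v b ∧
      ∀ w : Polynomial ℝ, w.natDegree + 1 ≤ q →
        (∫ x in a..b, (v x - p.eval x) * w.eval x) = 0 :=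
  dG_interpolant_existsUnique_general q hab Set.right_notMem_Ioo (v b) hvint
end

section
/- For every integer q ≥ 1, the map v ↦ π_cG^[q] v on bounded integrable functions on [a,b] is linear, satisfies π_cG^[q] v = v whenever v is a polynomial of degree at most q, and there is a constant C = C(q) > 0, independent of the interval [a,b], such that ‖π_cG^[q] v‖_{L∞([a,b])} ≤ C·‖v‖_{L∞([a,b])} for every bounded integrable v : [a,b] → ℝ. -/
open MeasureTheory

/-!
A polynomial vanishing at both endpoints factors as `p = (X - a) * (X - b) * r`. Testing its
orthogonality with `r` itself makes the weight `(x - a) * (b - x)` appear, which is positive inside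
the interval, so `r = 0`. Thus the interpolant is unique, and linearity and exactness follow because
the defining conditions are linear and a polynomial interpolates itself.

The same uniqueness says that on `[0, 1]` the endpoint values and finitely many moments determine a
polynomial of degree at most `q`. These data live in a finite-dimensional space, so they control the
maximum norm; for an interpolant of `v` they are bounded by the maximum norm of `v`. The
interpolation conditions are invariant under affine changes of variable, which carries the bound to
every interval with the same constant.
-/

section

open Polynomial Set

lemma exists_forall_norm_le_mul_norm_of_ker_eq_bot {𝕜 V E F : Type*} [NontriviallyNormedField 𝕜]
    [CompleteSpace 𝕜] [AddCommGroup V] [Module 𝕜 V] [NormedAddCommGroup E] [NormedSpace 𝕜 E]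
    [FiniteDimensional 𝕜 E] [NormedAddCommGroup F] [NormedSpace 𝕜 F]
    (S : V →ₗ[𝕜] F) (T : V →ₗ[𝕜] E) (hT : LinearMap.ker T = ⊥) :
    ∃ C : ℝ, 0 < C ∧ ∀ x, ‖S x‖ ≤ C * ‖T x‖ := by
  obtain ⟨G, hG⟩ := T.exists_leftInverse_of_injective hT
  let L : E →L[𝕜] F := LinearMap.toContinuousLinearMap (S ∘ₗ G)
  refine ⟨‖L‖ + 1, by positivity, fun x => ?_⟩
  have hLT : L (T x) = S x := congrArg S (LinearMap.congr_fun hG x)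
  calc ‖S x‖ = ‖L (T x)‖ := by rw [hLT]
    _ ≤ ‖L‖ * ‖T x‖ := L.le_opNorm (T x)
    _ ≤ (‖L‖ + 1) * ‖T x‖ := by gcongr; exact le_add_of_nonneg_right zero_le_one

/-- Integration of real polynomials over `[a, b]`, as a linear functional. -/
noncomputable def polyIntegral (a b : ℝ) : ℝ[X] →ₗ[ℝ] ℝ where
  toFun p := ∫ x in a..b, p.eval x
  map_add' p r := by
    simp only [eval_add]
    exact intervalIntegral.integral_add (p.continuous.intervalIntegrable a b)
      (r.continuous.intervalIntegrable a b)
  map_smul' c p := by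
    simp only [eval_smul, smul_eq_mul, RingHom.id_apply]
    exact intervalIntegral.integral_const_mul c _

lemma polyIntegral_apply (a b : ℝ) (p : ℝ[X]) : polyIntegral a b p = ∫ x in a..b, p.eval x := rfl

lemma map_mul_eq_zero_of_forall_map_mul_X_pow {R M : Type*} [CommSemiring R] [AddCommMonoid M]
    [Module R M] (φ : R[X] →ₗ[R] M) {n : ℕ} {p : R[X]} (hp : ∀ i < n, φ (p * X ^ i) = 0)
    {w : R[X]} (hw : w.natDegree < n) : φ (p * w) = 0 := by
  rw [w.as_sum_range_C_mul_X_pow' hw, Finset.mul_sum, map_sum]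
  refine Finset.sum_eq_zero fun i hi => ?_
  rw [← smul_eq_C_mul, mul_smul_comm, map_smul, hp i (Finset.mem_range.mp hi), smul_zero]

lemma integral_mul_sq_eval_pos {a b : ℝ} (hab : a < b) {r : ℝ[X]} (hr : r ≠ 0) :
    0 < ∫ x in a..b, (x - a) * (b - x) * r.eval x ^ 2 := by
  obtain ⟨c, ⟨hac, hcb⟩, hrc⟩ : ∃ c ∈ Ioo a b, r.eval c ≠ 0 := by
    by_contra! h
    exact hr (eq_zero_of_infinite_isRoot r ((Ioo_infinite hab).mono h))
  refine intervalIntegral.integral_pos hab (by fun_prop) (fun x hx => ?_)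
    ⟨c, ⟨hac.le, hcb.le⟩, ?_⟩
  · exact mul_nonneg (mul_nonneg (sub_nonneg.mpr hx.1.le) (sub_nonneg.mpr hx.2)) (sq_nonneg _)
  · exact mul_pos (mul_pos (sub_pos.mpr hac) (sub_pos.mpr hcb)) (sq_pos_of_ne_zero hrc)

lemma X_sub_C_mul_X_sub_C_dvd {K : Type*} [Field K] {a b : K} (hab : a ≠ b) {p : K[X]}
    (ha : p.IsRoot a) (hb : p.IsRoot b) : (X - C a) * (X - C b) ∣ p :=
  (isCoprime_X_sub_C_of_isUnit_sub (sub_ne_zero.mpr hab).isUnit).mul_dvd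
    (dvd_iff_isRoot.mpr ha) (dvd_iff_isRoot.mpr hb)

lemma intervalIntegrable_comp_mul_add {E : Type*} [NormedAddCommGroup E] {f : ℝ → E}
    {a b c d : ℝ} (hf : IntervalIntegrable f volume (c * a + d) (c * b + d)) :
    IntervalIntegrable (fun x => f (c * x + d)) volume a b := by
  rcases eq_or_ne c 0 with rfl | hc
  · simp
  · simpa [hc] using (hf.comp_add_right d).comp_mul_left (c := c)

/-- Bounded integrable functions on `[a, b]`, the domain of the interpolation operator. -/
structure IsBoundedIntegrable (a b : ℝ) (v : ℝ → ℝ) : Prop where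
  intervalIntegrable : IntervalIntegrable v volume a b
  exists_bound : ∃ M : ℝ, ∀ x ∈ Icc a b, |v x| ≤ M

namespace IsBoundedIntegrable

variable {a b : ℝ} {u v : ℝ → ℝ}

lemma add (hu : IsBoundedIntegrable a b u) (hv : IsBoundedIntegrable a b v) :
    IsBoundedIntegrable a b (u + v) := by
  obtain ⟨M, hM⟩ := hu.exists_bound
  obtain ⟨N, hN⟩ := hv.exists_bound
  exact ⟨hu.intervalIntegrable.add hv.intervalIntegrable, M + N, fun x hx =>
    (abs_add_le _ _).trans (add_le_add (hM x hx) (hN x hx))⟩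

lemma const_mul (c : ℝ) (hv : IsBoundedIntegrable a b v) :
    IsBoundedIntegrable a b (fun x => c * v x) := by
  obtain ⟨M, hM⟩ := hv.exists_bound
  refine ⟨hv.intervalIntegrable.const_mul c, |c| * M, fun x hx => ?_⟩
  rw [abs_mul]
  exact mul_le_mul_of_nonneg_left (hM x hx) (abs_nonneg c)

lemma polynomial_eval (p : ℝ[X]) : IsBoundedIntegrable a b (fun x => p.eval x) :=
  ⟨p.continuous.intervalIntegrable a b,
    isCompact_Icc.exists_bound_of_continuousOn p.continuous.continuousOn⟩

end IsBoundedIntegrable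

/-- `p` is the cG interpolant `π_cG^[q] v` on `[a, b]`. The test degree bound `q - 2` is written
additively because truncated subtraction would admit constant test functions when `q = 1`. -/
structure IsCGInterpolant (q : ℕ) (a b : ℝ) (v : ℝ → ℝ) (p : ℝ[X]) : Prop where
  natDegree_le : p.natDegree ≤ q
  eval_left : p.eval a = v a
  eval_right : p.eval b = v b
  integral_sub_mul_eq_zero : ∀ w : ℝ[X], w.natDegree + 2 ≤ q →
    ∫ x in a..b, (v x - p.eval x) * w.eval x = 0

/-- The degrees of freedom of the cG interpolant on the reference interval `[0, 1]`: the endpoint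
values and the moments against `1, X, …, X ^ (q - 2)`. -/
noncomputable def cGDegreesOfFreedom (q : ℕ) : ℝ[X] →ₗ[ℝ] ℝ × ℝ × (Fin (q - 1) → ℝ) :=
  (leval 0).prod ((leval 1).prod
    (LinearMap.pi fun i => polyIntegral 0 1 ∘ₗ LinearMap.mulRight ℝ (X ^ (i : ℕ))))

lemma cGDegreesOfFreedom_apply (q : ℕ) (p : ℝ[X]) :
    cGDegreesOfFreedom q p = (p.eval 0, p.eval 1,
      fun i : Fin (q - 1) => polyIntegral 0 1 (p * X ^ (i : ℕ))) := rfl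

namespace IsCGInterpolant

variable {q : ℕ} {a b : ℝ} {u v : ℝ → ℝ} {p r : ℝ[X]}

lemma add (hu : IntervalIntegrable u volume a b) (hv : IntervalIntegrable v volume a b)
    (hp : IsCGInterpolant q a b u p) (hr : IsCGInterpolant q a b v r) :
    IsCGInterpolant q a b (u + v) (p + r) where
  natDegree_le := natDegree_add_le_of_degree_le hp.natDegree_le hr.natDegree_le
  eval_left := by rw [eval_add, hp.eval_left, hr.eval_left, Pi.add_apply]
  eval_right := by rw [eval_add, hp.eval_right, hr.eval_right, Pi.add_apply]
  integral_sub_mul_eq_zero w hw := by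
    have integrable_sub_mul {f : ℝ → ℝ} (hf : IntervalIntegrable f volume a b) (s : ℝ[X]) :
        IntervalIntegrable (fun x => (f x - s.eval x) * w.eval x) volume a b :=
      (hf.sub (s.continuous.intervalIntegrable a b)).mul_continuousOn w.continuous.continuousOn
    calc ∫ x in a..b, ((u + v) x - (p + r).eval x) * w.eval x
        = ∫ x in a..b, (u x - p.eval x) * w.eval x + (v x - r.eval x) * w.eval x := by
          congr! 2 with x
          rw [Pi.add_apply, eval_add]
          ring
      _ = 0 := by
          rw [intervalIntegral.integral_add (integrable_sub_mul hu p) (integrable_sub_mul hv r),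
            hp.integral_sub_mul_eq_zero w hw, hr.integral_sub_mul_eq_zero w hw, add_zero]

lemma const_mul (c : ℝ) (hp : IsCGInterpolant q a b v p) :
    IsCGInterpolant q a b (fun x => c * v x) (C c * p) where
  natDegree_le := (natDegree_C_mul_le c p).trans hp.natDegree_le
  eval_left := by rw [eval_C_mul, hp.eval_left]
  eval_right := by rw [eval_C_mul, hp.eval_right]
  integral_sub_mul_eq_zero w hw := by
    simp only [eval_C_mul, ← mul_sub, mul_assoc, intervalIntegral.integral_const_mul,
      hp.integral_sub_mul_eq_zero w hw, mul_zero]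

lemma self (a b : ℝ) (hp : p.natDegree ≤ q) : IsCGInterpolant q a b (fun x => p.eval x) p where
  natDegree_le := hp
  eval_left := rfl
  eval_right := rfl
  integral_sub_mul_eq_zero w _ := by simp only [sub_self, zero_mul, intervalIntegral.integral_zero]

lemma eq_zero (hab : a < b) (hp : IsCGInterpolant q a b 0 p) : p = 0 := by
  obtain ⟨r, rfl⟩ := X_sub_C_mul_X_sub_C_dvd hab.ne hp.eval_left hp.eval_right
  by_contra h
  have hr : r ≠ 0 := right_ne_zero_of_mul h
  have hdeg : r.natDegree + 2 ≤ q := by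
    have hmonic : ((X - C a) * (X - C b)).Monic := (monic_X_sub_C a).mul (monic_X_sub_C b)
    have hle := hp.natDegree_le
    rw [hmonic.natDegree_mul' hr, (monic_X_sub_C a).natDegree_mul (monic_X_sub_C b),
      natDegree_X_sub_C, natDegree_X_sub_C] at hle
    omega
  refine (integral_mul_sq_eval_pos hab hr).ne' ?_
  rw [← hp.integral_sub_mul_eq_zero r hdeg]
  congr! 2 with x
  simp only [eval_mul, eval_sub, eval_X, eval_C, Pi.zero_apply]
  ring

lemma unique (hab : a < b) (hv : IntervalIntegrable v volume a b)
    (hp : IsCGInterpolant q a b v p) (hr : IsCGInterpolant q a b v r) : p = r := by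
  have hdiff := hp.add hv (hv.const_mul (-1)) (hr.const_mul (-1))
  have hv0 : (v + fun x => -1 * v x) = 0 := by
    funext x
    simp
  rw [hv0] at hdiff
  rw [← sub_eq_zero, ← hdiff.eq_zero hab, C_neg, C_1, neg_one_mul, sub_eq_add_neg]

lemma comp_mul_add {c d : ℝ} (hc : c ≠ 0)
    (hp : IsCGInterpolant q (c * a + d) (c * b + d) v p) :
    IsCGInterpolant q a b (fun x => v (c * x + d)) (p.comp (C c * X + C d)) where
  natDegree_le := by
    rw [natDegree_comp, natDegree_linear hc, mul_one]
    exact hp.natDegree_le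
  eval_left := by simpa using hp.eval_left
  eval_right := by simpa using hp.eval_right
  integral_sub_mul_eq_zero w hw := by
    let z : ℝ[X] := w.comp (C c⁻¹ * X + C (-(c⁻¹ * d)))
    have hz : z.natDegree = w.natDegree := by
      rw [natDegree_comp, natDegree_linear (inv_ne_zero hc), mul_one]
    have hz_eval (x : ℝ) : z.eval (c * x + d) = w.eval x := by
      simp [z, mul_add, hc]
    have hsubst := intervalIntegral.integral_comp_mul_add (a := a) (b := b)
      (fun y => (v y - p.eval y) * z.eval y) hc d
    rw [hp.integral_sub_mul_eq_zero z (hz ▸ hw), smul_zero] at hsubst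
    simpa [hz_eval] using hsubst

lemma polyIntegral_mul (hv : IntervalIntegrable v volume a b) (hp : IsCGInterpolant q a b v p)
    {w : ℝ[X]} (hw : w.natDegree + 2 ≤ q) :
    polyIntegral a b (p * w) = ∫ x in a..b, v x * w.eval x := by
  have horth := hp.integral_sub_mul_eq_zero w hw
  have integrable_mul {f : ℝ → ℝ} (hf : IntervalIntegrable f volume a b) :
      IntervalIntegrable (fun x => f x * w.eval x) volume a b :=
    hf.mul_continuousOn w.continuous.continuousOn
  simp only [sub_mul] at horth
  rw [intervalIntegral.integral_sub (integrable_mul hv)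
    (integrable_mul (p.continuous.intervalIntegrable a b)), sub_eq_zero] at horth
  simp only [polyIntegral_apply, eval_mul, horth]

lemma norm_cGDegreesOfFreedom_le (hv : IntervalIntegrable v volume 0 1)
    (hp : IsCGInterpolant q 0 1 v p) {M : ℝ} (hM : ∀ x ∈ Icc (0 : ℝ) 1, |v x| ≤ M) :
    ‖cGDegreesOfFreedom q p‖ ≤ M := by
  have hv0 : |v 0| ≤ M := hM 0 (left_mem_Icc.mpr zero_le_one)
  have hv1 : |v 1| ≤ M := hM 1 (right_mem_Icc.mpr zero_le_one)
  have hmoment (i : Fin (q - 1)) : ‖∫ x in (0 : ℝ)..1, v x * x ^ (i : ℕ)‖ ≤ M := by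
    have hbound : ∀ x ∈ uIoc (0 : ℝ) 1, ‖v x * x ^ (i : ℕ)‖ ≤ M := fun x hx => by
      rw [uIoc_of_le zero_le_one] at hx
      rw [norm_mul, Real.norm_of_nonneg (pow_nonneg hx.1.le i)]
      exact (mul_le_of_le_one_right (norm_nonneg _) (pow_le_one₀ hx.1.le hx.2)).trans
        (hM x (Ioc_subset_Icc_self hx))
    simpa using intervalIntegral.norm_integral_le_of_norm_le_const hbound
  rw [cGDegreesOfFreedom_apply, hp.eval_left, hp.eval_right]
  refine norm_prod_le_iff.mpr ⟨hv0, norm_prod_le_iff.mpr ⟨hv1, ?_⟩⟩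
  refine (pi_norm_le_iff_of_nonneg ((abs_nonneg _).trans hv0)).mpr fun i => ?_
  have hdeg : (X ^ (i : ℕ) : ℝ[X]).natDegree + 2 ≤ q := by
    rw [natDegree_X_pow]
    omega
  simpa only [hp.polyIntegral_mul hv hdeg, eval_pow, eval_X] using hmoment i

end IsCGInterpolant

lemma eq_zero_of_cGDegreesOfFreedom_eq_zero {q : ℕ} {p : ℝ[X]} (hdeg : p.natDegree ≤ q)
    (hp : cGDegreesOfFreedom q p = 0) : p = 0 := by
  rw [cGDegreesOfFreedom_apply, Prod.mk_eq_zero, Prod.mk_eq_zero] at hp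
  obtain ⟨h0, h1, hmoments⟩ := hp
  have hinterp : IsCGInterpolant q 0 1 0 p :=
    { natDegree_le := hdeg
      eval_left := h0
      eval_right := h1
      integral_sub_mul_eq_zero := fun w hw => by
        have horth : polyIntegral 0 1 (p * w) = 0 :=
          map_mul_eq_zero_of_forall_map_mul_X_pow (polyIntegral 0 1)
            (fun i hi => congrFun hmoments ⟨i, hi⟩) (by omega : w.natDegree < q - 1)
        simpa [polyIntegral_apply] using horth }
  exact hinterp.eq_zero zero_lt_one

lemma exists_forall_abs_eval_le_mul_norm_cGDegreesOfFreedom (q : ℕ) :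
    ∃ C : ℝ, 0 < C ∧ ∀ p : ℝ[X], p.natDegree ≤ q → ∀ x ∈ Icc (0 : ℝ) 1,
      |p.eval x| ≤ C * ‖cGDegreesOfFreedom q p‖ := by
  have hker : LinearMap.ker ((cGDegreesOfFreedom q).domRestrict (degreeLE ℝ q)) = ⊥ :=
    LinearMap.ker_eq_bot'.mpr fun p hp => Subtype.ext <|
      eq_zero_of_cGDegreesOfFreedom_eq_zero
        (natDegree_le_iff_degree_le.mpr (mem_degreeLE.mp p.2)) hp
  obtain ⟨C, hC, hbound⟩ := exists_forall_norm_le_mul_norm_of_ker_eq_bot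
    ((toContinuousMapOnAlgHom (Icc (0 : ℝ) 1)).toLinearMap.domRestrict (degreeLE ℝ q)) _ hker
  refine ⟨C, hC, fun p hp x hx => ?_⟩
  have hmem : p ∈ degreeLE ℝ q := mem_degreeLE.mpr (natDegree_le_iff_degree_le.mp hp)
  exact (ContinuousMap.norm_coe_le_norm (p.toContinuousMapOn (Icc 0 1)) ⟨x, hx⟩).trans
    (hbound ⟨p, hmem⟩)

lemma exists_forall_isCGInterpolant_abs_eval_le (q : ℕ) :
    ∃ K : ℝ, 0 < K ∧ ∀ {a b : ℝ}, a < b → ∀ {v : ℝ → ℝ} {p : ℝ[X]},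
      IntervalIntegrable v volume a b → IsCGInterpolant q a b v p →
      ∀ {M : ℝ}, (∀ x ∈ Icc a b, |v x| ≤ M) → ∀ x ∈ Icc a b, |p.eval x| ≤ K * M := by
  obtain ⟨K, hK, hdof⟩ := exists_forall_abs_eval_le_mul_norm_cGDegreesOfFreedom q
  refine ⟨K, hK, fun {a b} hab {v p} hv hp {M} hM x hx => ?_⟩
  have hba : b - a ≠ 0 := (sub_pos.mpr hab).ne'
  have himage : (fun t => (b - a) * t + a) '' Icc 0 1 = Icc a b := by
    rw [image_affine_Icc' (sub_pos.mpr hab), mul_zero, zero_add, mul_one, sub_add_cancel]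
  have hv' : IntervalIntegrable (fun t => v ((b - a) * t + a)) volume 0 1 :=
    intervalIntegrable_comp_mul_add (by simpa using hv)
  have hp' : IsCGInterpolant q 0 1 (fun t => v ((b - a) * t + a)) (p.comp (C (b - a) * X + C a)) :=
    .comp_mul_add hba (by simpa using hp)
  have hM' : ∀ t ∈ Icc (0 : ℝ) 1, |v ((b - a) * t + a)| ≤ M := fun t ht =>
    hM _ (himage ▸ mem_image_of_mem _ ht)
  obtain ⟨t, ht, rfl⟩ := himage.symm.subset hx
  calc |p.eval ((b - a) * t + a)|
      = |(p.comp (C (b - a) * X + C a)).eval t| := by simp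
    _ ≤ K * ‖cGDegreesOfFreedom q (p.comp (C (b - a) * X + C a))‖ :=
        hdof _ hp'.natDegree_le t ht
    _ ≤ K * M := by
        gcongr
        exact hp'.norm_cGDegreesOfFreedom_le hv' hM'

end

/-- Properties of the cG interpolant `π_cG^[q]`: for `q ≥ 1` the map `v ↦ π_cG^[q] v`
(characterized by the interpolation and orthogonality conditions) is linear on
bounded integrable functions, reproduces polynomials of degree at most `q`, and is
bounded in the maximum norm by a constant `C = C(q) > 0` independent of the
interval `[a,b]`. -/
theorem cG_interpolant_properties (q : ℕ) (hq : 1 ≤ q) :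
    ∃ C : ℝ, 0 < C ∧ ∀ (a b : ℝ), a < b →
      ∀ interp : (ℝ → ℝ) → Polynomial ℝ,
        -- `interp` is the interpolant `π_cG^[q]` on `[a,b]`:
        (∀ v : ℝ → ℝ, IntervalIntegrable v volume a b →
            (∃ M : ℝ, ∀ x ∈ Set.Icc a b, |v x| ≤ M) →
            (interp v).natDegree ≤ q ∧ (interp v).eval a = v a ∧ (interp v).eval b = v b ∧
            ∀ w : Polynomial ℝ, w.natDegree + 2 ≤ q →
              (∫ x in a..b, (v x - (interp v).eval x) * w.eval x) = 0) →
        -- linearity (additivity and homogeneity) on bounded integrable functions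
        ((∀ u v : ℝ → ℝ, IntervalIntegrable u volume a b →
            (∃ M : ℝ, ∀ x ∈ Set.Icc a b, |u x| ≤ M) →
            IntervalIntegrable v volume a b →
            (∃ M : ℝ, ∀ x ∈ Set.Icc a b, |v x| ≤ M) →
            interp (u + v) = interp u + interp v) ∧
         (∀ (c : ℝ) (v : ℝ → ℝ), IntervalIntegrable v volume a b →
            (∃ M : ℝ, ∀ x ∈ Set.Icc a b, |v x| ≤ M) →
            interp (fun x => c * v x) = Polynomial.C c * interp v) ∧
         -- exactness on polynomials of degree at most q
         (∀ p : Polynomial ℝ, p.natDegree ≤ q → interp (fun x => p.eval x) = p) ∧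
         -- boundedness: ‖π_cG v‖_{L∞} ≤ C ‖v‖_{L∞}
         (∀ v : ℝ → ℝ, IntervalIntegrable v volume a b →
            (∃ M : ℝ, ∀ x ∈ Set.Icc a b, |v x| ≤ M) →
            ∀ M : ℝ, (∀ x ∈ Set.Icc a b, |v x| ≤ M) →
              ∀ x ∈ Set.Icc a b, |(interp v).eval x| ≤ C * M)) := by
  obtain ⟨C, hC, hbound⟩ := exists_forall_isCGInterpolant_abs_eval_le q
  refine ⟨C, hC, fun a b hab interp hinterp => ?_⟩
  have isInterpolant {v : ℝ → ℝ} (hv : IsBoundedIntegrable a b v) :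
      IsCGInterpolant q a b v (interp v) :=
    let ⟨hdeg, hleft, hright, horth⟩ := hinterp v hv.intervalIntegrable hv.exists_bound
    ⟨hdeg, hleft, hright, horth⟩
  have interp_eq {v : ℝ → ℝ} {p : Polynomial ℝ} (hv : IsBoundedIntegrable a b v)
      (hp : IsCGInterpolant q a b v p) : interp v = p :=
    (isInterpolant hv).unique hab hv.intervalIntegrable hp
  refine ⟨fun u v hu hu_bdd hv hv_bdd => ?_, fun c v hv hv_bdd => ?_, fun p hp => ?_,
    fun v hv hv_bdd M hM => hbound hab hv (isInterpolant ⟨hv, hv_bdd⟩) hM⟩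
  · have hu' : IsBoundedIntegrable a b u := ⟨hu, hu_bdd⟩
    have hv' : IsBoundedIntegrable a b v := ⟨hv, hv_bdd⟩
    exact interp_eq (hu'.add hv') ((isInterpolant hu').add hu hv (isInterpolant hv'))
  · have hv' : IsBoundedIntegrable a b v := ⟨hv, hv_bdd⟩
    exact interp_eq (hv'.const_mul c) ((isInterpolant hv').const_mul c)
  · exact interp_eq (.polynomial_eval p) (.self a b hp)
end

section
/- Let q ≥ 0 be an integer, Λ > 0, and let π be a linear operator mapping bounded integrable functions on [a,b] into polynomials of degree at most q with ‖πv‖_{L∞([a,b])} ≤ Λ·‖v‖_{L∞([a,b])} for all bounded integrable v and πv = v for every polynomial v of degree at most q. Then there is a constant C = C(q,Λ) > 0 such that for every v : [a,b] → ℝ that is piecewise C^{q+1} with discontinuities at a < x_1 < ⋯ < x_n < b, one has ‖(πv)^{(p)} − v^{(p)}‖ ≤ C·k^{r+1−p}·‖v^{(r+1)}‖ + C·Σ_{j=1}^{n} Σ_{m=0}^{r} k^{m−p}·|[v^{(m)}]_{x_j}| for all p = 0,…,r+1 and r = 0,…,q. -/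
open MeasureTheory

/-!
Let `P` be the Taylor polynomial of degree `r` of the first piece of `v` at `a`. The remainder
`v - P` has the same jumps as `v` in derivatives of order at most `r`, the same derivative of order
`r + 1`, and vanishes to order `r` at `a`. Applying the mean value inequality piece by piece,
downwards from order `r + 1`, bounds `k ^ m * |(v - P)^(m)|` by
`T = ∑ l ≤ r, k ^ l * ∑ j, |[v^(l)]_{x_j}| + k ^ (r + 1) * ‖v^(r+1)‖` for every `m ≤ r + 1`.
Since `π v - P = π (v - P)` is a polynomial of degree at most `q` bounded by `Λ * T`, the inverse
inequality for polynomials bounds `k ^ p` times its `p`-th derivative by a multiple of `Λ * T`.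
-/

section Polynomial

open Polynomial

theorem iterate_derivative_comp_C_mul_X_add_C {R : Type*} [CommSemiring R] (Q : R[X]) (c d : R)
    (p : ℕ) :
    derivative^[p] (Q.comp (C c * X + C d)) =
      C (c ^ p) * (derivative^[p] Q).comp (C c * X + C d) := by
  induction p with
  | zero => simp
  | succ p ih =>
    rw [Function.iterate_succ_apply', ih, Function.iterate_succ_apply', derivative_C_mul,
      derivative_comp, pow_succ, C_mul, mul_assoc]
    simp

theorem exists_natDegree_le_iterate_derivative_eval_eq {𝕜 : Type*} [Field 𝕜] [CharZero 𝕜]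
    (r : ℕ) (a : 𝕜) (c : ℕ → 𝕜) :
    ∃ P : 𝕜[X], P.natDegree ≤ r ∧ ∀ m ≤ r, (derivative^[m] P).eval a = c m := by
  set S : 𝕜[X] := ∑ i ∈ Finset.range (r + 1), monomial i (c i / i.factorial) with hS
  refine ⟨taylor (-a) S, ?_, fun m hm => ?_⟩
  · rw [natDegree_taylor]
    exact natDegree_sum_le_of_forall_le _ _ fun i hi =>
      (natDegree_monomial_le _).trans (Finset.mem_range_succ_iff.mp hi)
  · have hcoeff : (hasseDeriv m (taylor (-a) S)).eval a = c m / m.factorial := by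
      rw [← taylor_coeff, taylor_taylor, add_neg_cancel, taylor_zero, hS, finsetSum_coeff]
      simp [coeff_monomial, Nat.lt_succ_of_le hm]
    rw [← factorial_smul_hasseDeriv, LinearMap.smul_apply, eval_smul, hcoeff, nsmul_eq_mul,
      mul_div_cancel₀ _ (Nat.cast_ne_zero.mpr m.factorial_ne_zero)]

theorem iterate_derivative_eval_eq_sum_lagrange_basis {𝕜 ι : Type*} [Field 𝕜] [DecidableEq ι]
    {w : Finset ι} {x : ι → 𝕜} (hx : Set.InjOn x w) {Q : 𝕜[X]} (hQ : Q.degree < w.card) (p : ℕ)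
    (s : 𝕜) :
    (derivative^[p] Q).eval s =
      ∑ i ∈ w, Q.eval (x i) * (derivative^[p] (Lagrange.basis w x i)).eval s := by
  conv_lhs => rw [Lagrange.eq_interpolate hx hQ, Lagrange.interpolate_apply]
  simp [iterate_derivative_sum, iterate_derivative_C_mul, eval_finsetSum]

section Inverse

variable {𝕜 : Type*} [NormedField 𝕜] {s t : Set 𝕜}

theorem exists_norm_iterate_derivative_eval_le (hs : s.Infinite) (ht : IsCompact t) (q p : ℕ) :
    ∃ K : ℝ, 0 ≤ K ∧ ∀ Q : 𝕜[X], Q.natDegree ≤ q → ∀ M : ℝ, (∀ x ∈ s, ‖Q.eval x‖ ≤ M) →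
      ∀ x ∈ t, ‖(derivative^[p] Q).eval x‖ ≤ K * M := by
  classical
  obtain ⟨w, hws, hcard⟩ := hs.exists_subset_card_eq (q + 1)
  have hbasis (i : 𝕜) : ∃ B : ℝ, ∀ x ∈ t,
      ‖(derivative^[p] (Lagrange.basis w id i)).eval x‖ ≤ B :=
    ht.exists_bound_of_continuousOn (Polynomial.continuous _).continuousOn
  choose B hB using hbasis
  refine ⟨∑ i ∈ w, |B i|, Finset.sum_nonneg fun i _ => abs_nonneg _, fun Q hQ M hM x hx => ?_⟩
  have hdeg : Q.degree < w.card := by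
    rw [hcard]
    exact degree_le_natDegree.trans_lt (mod_cast Nat.lt_succ_of_le hQ)
  rw [iterate_derivative_eval_eq_sum_lagrange_basis Function.injective_id.injOn hdeg,
    Finset.sum_mul]
  refine norm_sum_le_of_le _ fun i hi => ?_
  rw [norm_mul, mul_comm]
  exact mul_le_mul ((hB i x hx).trans (le_abs_self _)) (hM i (hws hi)) (norm_nonneg _)
    (abs_nonneg _)

theorem exists_forall_norm_iterate_derivative_eval_le (hs : s.Infinite) (ht : IsCompact t)
    (q : ℕ) :
    ∃ K : ℝ, 0 ≤ K ∧ ∀ Q : 𝕜[X], Q.natDegree ≤ q → ∀ M : ℝ, (∀ x ∈ s, ‖Q.eval x‖ ≤ M) →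
      ∀ p, ∀ x ∈ t, ‖(derivative^[p] Q).eval x‖ ≤ K * M := by
  choose K hK0 hK using exists_norm_iterate_derivative_eval_le hs ht q
  have hsum : 0 ≤ ∑ p ∈ Finset.range (q + 1), K p := Finset.sum_nonneg fun p _ => hK0 p
  refine ⟨∑ p ∈ Finset.range (q + 1), K p, hsum, fun Q hQ M hM p x hx => ?_⟩
  obtain ⟨x₀, hx₀⟩ := hs.nonempty
  have hM0 : 0 ≤ M := (norm_nonneg _).trans (hM x₀ hx₀)
  rcases le_or_gt p q with hp | hp
  · have hle : K p ≤ ∑ p ∈ Finset.range (q + 1), K p :=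
      Finset.single_le_sum (fun p _ => hK0 p) (Finset.mem_range_succ_iff.mpr hp)
    exact (hK p Q hQ M hM x hx).trans (mul_le_mul_of_nonneg_right hle hM0)
  · rw [iterate_derivative_eq_zero (hQ.trans_lt hp), eval_zero, norm_zero]
    exact mul_nonneg hsum hM0

end Inverse

theorem exists_pow_mul_abs_iterate_derivative_eval_le (q : ℕ) :
    ∃ K : ℝ, 0 ≤ K ∧ ∀ a b : ℝ, a < b → ∀ Q : ℝ[X], Q.natDegree ≤ q →
      ∀ M : ℝ, (∀ x ∈ Set.Icc a b, |Q.eval x| ≤ M) →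
      ∀ p, ∀ s ∈ Set.Icc a b, (b - a) ^ p * |(derivative^[p] Q).eval s| ≤ K * M := by
  obtain ⟨K, hK, hunit⟩ := exists_forall_norm_iterate_derivative_eval_le
    (Set.Icc_infinite (zero_lt_one' ℝ)) isCompact_Icc q
  refine ⟨K, hK, fun a b hab Q hQ M hM p s hs => ?_⟩
  have hk : 0 < b - a := sub_pos.mpr hab
  have hdeg : (Q.comp (C (b - a) * X + C a)).natDegree ≤ q :=
    natDegree_comp_le.trans <| (mul_le_of_le_one_right' natDegree_linear_le).trans hQ
  have hbound : ∀ x ∈ Set.Icc (0 : ℝ) 1, ‖(Q.comp (C (b - a) * X + C a)).eval x‖ ≤ M := by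
    intro x hx
    have hmem : (b - a) * x + a ∈ Set.Icc a b :=
      ⟨by nlinarith [hx.1], by nlinarith [hx.2]⟩
    simpa using hM _ hmem
  have hs' : (s - a) / (b - a) ∈ Set.Icc (0 : ℝ) 1 :=
    ⟨div_nonneg (sub_nonneg.mpr hs.1) hk.le, (div_le_one hk).mpr (by linarith [hs.2])⟩
  have hscaled := hunit _ hdeg M hbound p _ hs'
  rw [iterate_derivative_comp_C_mul_X_add_C] at hscaled
  simpa only [eval_mul, eval_C, eval_comp, eval_add, eval_X, mul_div_cancel₀ _ hk.ne',
    sub_add_cancel, Real.norm_eq_abs, abs_mul, abs_pow, abs_of_pos hk] using hscaled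

end Polynomial

section Nodes

theorem exists_le_mem_Icc_nodes {α : Type*} [LinearOrder α] {n : ℕ} {y : ℕ → α} {x : α}
    (hx : x ∈ Set.Icc (y 0) (y (n + 1))) : ∃ j ≤ n, x ∈ Set.Icc (y j) (y (j + 1)) := by
  induction n with
  | zero => exact ⟨0, le_rfl, hx⟩
  | succ n ih =>
    rcases le_total x (y (n + 1)) with h | h
    · obtain ⟨j, hj, hxj⟩ := ih ⟨hx.1, h⟩
      exact ⟨j, hj.trans n.le_succ, hxj⟩
    · exact ⟨n + 1, le_rfl, h, hx.2⟩

theorem Icc_nodes_subset {α : Type*} [Preorder α] {n : ℕ} {y : ℕ → α}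
    (hy : ∀ j ≤ n, y j ≤ y (j + 1)) {j : ℕ} (hj : j ≤ n) :
    Set.Icc (y j) (y (j + 1)) ⊆ Set.Icc (y 0) (y (n + 1)) := by
  have hmono : MonotoneOn y (Set.Iic (n + 1)) :=
    monotoneOn_of_le_add_one Set.ordConnected_Iic fun i _ _ hi => hy i (Nat.le_of_succ_le_succ hi)
  exact Set.Icc_subset_Icc (hmono (by simp) (by simp; omega) j.zero_le)
    (hmono (by simp; omega) (by simp) (by omega))

variable {E : Type*} [NormedAddCommGroup E] [NormedSpace ℝ E] {n : ℕ} {y : ℕ → ℝ}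

theorem norm_le_add_sum_jump_add_of_norm_deriv_le {f f' : ℕ → ℝ → E} {B : ℝ}
    (hf : ∀ j ≤ n, ∀ x ∈ Set.Icc (y j) (y (j + 1)),
      HasDerivWithinAt (f j) (f' j x) (Set.Icc (y j) (y (j + 1))) x)
    (hB : ∀ j ≤ n, ∀ x ∈ Set.Icc (y j) (y (j + 1)), ‖f' j x‖ ≤ B)
    (hy : ∀ j ≤ n, y j ≤ y (j + 1)) {j : ℕ} (hj : j ≤ n) :
    ∀ x ∈ Set.Icc (y j) (y (j + 1)),
      ‖f j x‖ ≤ ‖f 0 (y 0)‖ + ∑ i ∈ Finset.Icc 1 j, ‖f i (y i) - f (i - 1) (y i)‖ +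
        B * (x - y 0) := by
  have hpiece : ∀ j ≤ n, ∀ x ∈ Set.Icc (y j) (y (j + 1)),
      ‖f j x - f j (y j)‖ ≤ B * (x - y j) := fun j hj =>
    norm_image_sub_le_of_norm_deriv_le_segment' (hf j hj)
      fun x hx => hB j hj x (Set.Ico_subset_Icc_self hx)
  induction j with
  | zero =>
    intro x hx
    have := norm_le_norm_add_norm_sub' (f 0 x) (f 0 (y 0))
    simpa using this.trans (by gcongr; exact hpiece 0 hj x hx)
  | succ j ih =>
    intro x hx
    have hj' : j ≤ n := by omega
    rw [Finset.sum_Icc_succ_top (by omega), Nat.add_sub_cancel]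
    calc ‖f (j + 1) x‖
        = ‖f j (y (j + 1)) + (f (j + 1) (y (j + 1)) - f j (y (j + 1))) +
            (f (j + 1) x - f (j + 1) (y (j + 1)))‖ := by congr 1; abel
      _ ≤ ‖f j (y (j + 1))‖ + ‖f (j + 1) (y (j + 1)) - f j (y (j + 1))‖ +
            ‖f (j + 1) x - f (j + 1) (y (j + 1))‖ := norm_add₃_le
      _ ≤ _ := by
        linarith [ih hj' _ (Set.right_mem_Icc.mpr (hy j hj')), hpiece _ hj x hx]

theorem pow_mul_norm_le_sum_of_norm_deriv_le {F : ℕ → ℕ → ℝ → E} {r : ℕ} {J : ℕ → ℝ} {k M : ℝ}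
    (hk : 0 < k) (hyk : y (n + 1) - y 0 ≤ k) (hy : ∀ j ≤ n, y j ≤ y (j + 1))
    (hF : ∀ m ≤ r, ∀ j ≤ n, ∀ x ∈ Set.Icc (y j) (y (j + 1)),
      HasDerivWithinAt (F m j) (F (m + 1) j x) (Set.Icc (y j) (y (j + 1))) x)
    (hJ : ∀ m ≤ r,
      ‖F m 0 (y 0)‖ + ∑ i ∈ Finset.Icc 1 n, ‖F m i (y i) - F m (i - 1) (y i)‖ ≤ J m)
    (hM : ∀ j ≤ n, ∀ x ∈ Set.Icc (y j) (y (j + 1)), ‖F (r + 1) j x‖ ≤ M)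
    {m : ℕ} (hm : m ≤ r + 1) :
    ∀ j ≤ n, ∀ x ∈ Set.Icc (y j) (y (j + 1)),
      k ^ m * ‖F m j x‖ ≤ ∑ l ∈ Finset.Ico m (r + 1), k ^ l * J l + k ^ (r + 1) * M := by
  induction hm using Nat.decreasingInduction with
  | self =>
    intro j hj x hx
    simpa using mul_le_mul_of_nonneg_left (hM j hj x hx) (by positivity)
  | of_succ m hm ih =>
    intro j hj x hx
    have hmr : m ≤ r := Nat.le_of_lt_succ hm
    set B := (∑ l ∈ Finset.Ico (m + 1) (r + 1), k ^ l * J l + k ^ (r + 1) * M) / k ^ (m + 1)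
      with hBdef
    have hB : ∀ j ≤ n, ∀ x ∈ Set.Icc (y j) (y (j + 1)), ‖F (m + 1) j x‖ ≤ B := fun j hj x hx =>
      (le_div_iff₀' (pow_pos hk _)).mpr (ih j hj x hx)
    have hB0 : 0 ≤ B := (norm_nonneg _).trans (hB j hj x hx)
    have hxk : x - y 0 ≤ k := by linarith [(Icc_nodes_subset hy hj hx).2]
    have hjump : ‖F m 0 (y 0)‖ + ∑ i ∈ Finset.Icc 1 j, ‖F m i (y i) - F m (i - 1) (y i)‖ ≤ J m :=
      (hJ m hmr).trans' (by gcongr)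
    calc k ^ m * ‖F m j x‖ ≤ k ^ m * (J m + B * k) := by
          gcongr
          exact (norm_le_add_sum_jump_add_of_norm_deriv_le (hF m hmr) hB hy hj x hx).trans
            (by gcongr)
      _ = _ := by
          rw [Finset.sum_eq_sum_Ico_succ_bot hm, hBdef]
          field_simp
          ring

end Nodes

section Piecewise

/-- The jump `[v^{(m)}]_{y j}` at the node `y j` of the function `v` with pieces `g`; it is only
meaningful for `1 ≤ j`, since `j - 1` is truncated. -/
noncomputable def jump (y : ℕ → ℝ) (g : ℕ → ℝ → ℝ) (m j : ℕ) : ℝ :=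
  iteratedDeriv m (g j) (y j) - iteratedDeriv m (g (j - 1)) (y j)

/-- `v` is glued from the pieces `g 0, …, g n`, the `j`-th of which lives on `[y j, y (j + 1)]`.
At a node, `v` takes the value of some adjacent piece. -/
structure IsPiecewise (n : ℕ) (y : ℕ → ℝ) (g : ℕ → ℝ → ℝ) (v : ℝ → ℝ) : Prop where
  le_succ : ∀ j ≤ n, y j ≤ y (j + 1)
  eqOn_Ioo : ∀ j ≤ n, Set.EqOn v (g j) (Set.Ioo (y j) (y (j + 1)))
  exists_eq : ∀ x ∈ Set.Icc (y 0) (y (n + 1)), ∃ j ≤ n, x ∈ Set.Icc (y j) (y (j + 1)) ∧ v x = g j x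

variable {n : ℕ} {y : ℕ → ℝ} {g : ℕ → ℝ → ℝ} {v : ℝ → ℝ}

theorem exists_eq_at_node (hy : ∀ j ≤ n, y j ≤ y (j + 1)) (hfirst : v (y 0) = g 0 (y 0))
    (hlast : v (y (n + 1)) = g n (y (n + 1)))
    (hinner : ∀ j, 1 ≤ j → j ≤ n → v (y j) = g (j - 1) (y j) ∨ v (y j) = g j (y j))
    {i : ℕ} (hi : i ≤ n + 1) :
    ∃ j ≤ n, y i ∈ Set.Icc (y j) (y (j + 1)) ∧ v (y i) = g j (y i) := by
  have left_mem {j : ℕ} (hj : j ≤ n) := Set.left_mem_Icc.mpr (hy j hj)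
  have right_mem {j : ℕ} (hj : j ≤ n) := Set.right_mem_Icc.mpr (hy j hj)
  rcases i with _ | i
  · exact ⟨0, n.zero_le, left_mem n.zero_le, hfirst⟩
  have hin : i ≤ n := Nat.le_of_succ_le_succ hi
  rcases hin.eq_or_lt with rfl | hlt
  · exact ⟨i, le_rfl, right_mem le_rfl, hlast⟩
  · rcases hinner (i + 1) i.succ_pos hlt with hv | hv
    · exact ⟨i, hin, right_mem hin, hv⟩
    · exact ⟨i + 1, hlt, left_mem hlt, hv⟩

theorem isPiecewise_of_eqOn_Ioo (hy : ∀ j ≤ n, y j ≤ y (j + 1))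
    (hv : ∀ j ≤ n, Set.EqOn v (g j) (Set.Ioo (y j) (y (j + 1)))) (hfirst : v (y 0) = g 0 (y 0))
    (hlast : v (y (n + 1)) = g n (y (n + 1)))
    (hinner : ∀ j, 1 ≤ j → j ≤ n → v (y j) = g (j - 1) (y j) ∨ v (y j) = g j (y j)) :
    IsPiecewise n y g v := by
  refine ⟨hy, hv, fun x hx => ?_⟩
  obtain ⟨j, hj, hxj⟩ := exists_le_mem_Icc_nodes hx
  rcases hxj.1.eq_or_lt with rfl | hleft
  · exact exists_eq_at_node hy hfirst hlast hinner (hj.trans n.le_succ)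
  rcases hxj.2.eq_or_lt with rfl | hright
  · exact exists_eq_at_node hy hfirst hlast hinner (Nat.succ_le_succ hj)
  · exact ⟨j, hj, hxj, hv j hj ⟨hleft, hright⟩⟩

theorem IsPiecewise.intervalIntegrable (h : IsPiecewise n y g v)
    (hg : ∀ j ≤ n, Continuous (g j)) :
    IntervalIntegrable v volume (y 0) (y (n + 1)) := by
  refine IntervalIntegrable.trans_iterate fun j hj => ?_
  have hjn : j ≤ n := Nat.le_of_lt_succ hj
  refine ((hg j hjn).intervalIntegrable _ _).congr_uIoo ?_
  rw [Set.uIoo_of_le (h.le_succ j hjn)]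
  exact (h.eqOn_Ioo j hjn).symm

open Polynomial

theorem hasDerivAt_iteratedDeriv_sub_eval {f : ℝ → ℝ} {r m : ℕ} (hf : ContDiff ℝ (r + 1) f)
    (hm : m ≤ r) (P : ℝ[X]) (x : ℝ) :
    HasDerivAt (fun x => iteratedDeriv m f x - (derivative^[m] P).eval x)
      (iteratedDeriv (m + 1) f x - (derivative^[m + 1] P).eval x) x := by
  rw [iteratedDeriv_succ, Function.iterate_succ_apply']
  have hlt : (m : WithTop ℕ∞) < r + 1 := mod_cast Nat.lt_succ_of_le hm
  exact (hf.differentiable_iteratedDeriv m hlt x).hasDerivAt.sub (Polynomial.hasDerivAt _ x)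

theorem exists_polynomial_pow_mul_abs_iteratedDeriv_sub_le {r : ℕ} {k M : ℝ} (hk : 0 < k)
    (hyk : y (n + 1) - y 0 ≤ k) (hy : ∀ j ≤ n, y j ≤ y (j + 1))
    (hg : ∀ j ≤ n, ContDiff ℝ (r + 1) (g j))
    (hM : ∀ j ≤ n, ∀ x ∈ Set.Icc (y j) (y (j + 1)), |iteratedDeriv (r + 1) (g j) x| ≤ M) :
    ∃ P : ℝ[X], P.natDegree ≤ r ∧ ∀ m ≤ r + 1, ∀ j ≤ n, ∀ x ∈ Set.Icc (y j) (y (j + 1)),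
      k ^ m * |iteratedDeriv m (g j) x - (derivative^[m] P).eval x| ≤
        ∑ l ∈ Finset.range (r + 1), k ^ l * ∑ i ∈ Finset.Icc 1 n, |jump y g l i| +
          k ^ (r + 1) * M := by
  obtain ⟨P, hPdeg, hP⟩ := exists_natDegree_le_iterate_derivative_eval_eq r (y 0)
    fun m => iteratedDeriv m (g 0) (y 0)
  set R : ℕ → ℕ → ℝ → ℝ := fun m j x => iteratedDeriv m (g j) x - (derivative^[m] P).eval x
  have hderiv : ∀ m ≤ r, ∀ j ≤ n, ∀ x, HasDerivAt (R m j) (R (m + 1) j x) x := fun m hm j hj =>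
    hasDerivAt_iteratedDeriv_sub_eval (hg j hj) hm P
  have hjumps : ∀ m ≤ r, ‖R m 0 (y 0)‖ + ∑ i ∈ Finset.Icc 1 n, ‖R m i (y i) - R m (i - 1) (y i)‖ ≤
      ∑ i ∈ Finset.Icc 1 n, |jump y g m i| := fun m hm => by simp [R, hP m hm, jump]
  have htop : ∀ j ≤ n, ∀ x ∈ Set.Icc (y j) (y (j + 1)), ‖R (r + 1) j x‖ ≤ M := fun j hj x hx => by
    simpa [R, iterate_derivative_eq_zero (Nat.lt_succ_of_le hPdeg)] using hM j hj x hx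
  refine ⟨P, hPdeg, fun m hm j hj x hx => (pow_mul_norm_le_sum_of_norm_deriv_le hk hyk hy
    (fun m hm j hj x _ => (hderiv m hm j hj x).hasDerivWithinAt) hjumps htop hm j hj x hx).trans ?_⟩
  rw [Finset.range_eq_Ico]
  gcongr
  exact m.zero_le

end Piecewise

section Projection

open Polynomial

/-- The domain of an interpolation operator: the bounded integrable functions on `[a, b]`. -/
def IsBoundedIntegrable_s6 (a b : ℝ) (v : ℝ → ℝ) : Prop :=
  IntervalIntegrable v volume a b ∧ ∃ M : ℝ, ∀ x ∈ Set.Icc a b, |v x| ≤ M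

/-- `π` is a projection onto the polynomials of degree at most `q` with norm at most `Λ` on
`[a, b]`. Linearity and exactness are merged into compatibility with adding such polynomials, so
that nonlinear operators such as best uniform approximation qualify too. -/
structure IsBoundedPolynomialProjection (q : ℕ) (Λ a b : ℝ) (π : (ℝ → ℝ) → ℝ[X]) : Prop where
  natDegree_le : ∀ v, IsBoundedIntegrable_s6 a b v → (π v).natDegree ≤ q
  map_add_eval : ∀ v, IsBoundedIntegrable_s6 a b v → ∀ P : ℝ[X], P.natDegree ≤ q →
    π (v + fun x => P.eval x) = π v + P
  abs_eval_le : ∀ v, IsBoundedIntegrable_s6 a b v → ∀ M : ℝ, (∀ x ∈ Set.Icc a b, |v x| ≤ M) →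
    ∀ x ∈ Set.Icc a b, |(π v).eval x| ≤ Λ * M

variable {q : ℕ} {Λ a b : ℝ} {π : (ℝ → ℝ) → ℝ[X]}

theorem isBoundedIntegrable_of_continuous {f : ℝ → ℝ} (hf : Continuous f) (a b : ℝ) :
    IsBoundedIntegrable_s6 a b f :=
  ⟨hf.intervalIntegrable a b, isCompact_Icc.exists_bound_of_continuousOn hf.continuousOn⟩

theorem IsBoundedPolynomialProjection.natDegree_le_and_abs_eval_sub_le
    (hπ : IsBoundedPolynomialProjection q Λ a b π) {v : ℝ → ℝ}
    (hv : IntervalIntegrable v volume a b) {P : ℝ[X]} (hP : P.natDegree ≤ q) {ε : ℝ}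
    (hε : ∀ x ∈ Set.Icc a b, |v x - P.eval x| ≤ ε) :
    (π v - P).natDegree ≤ q ∧ ∀ x ∈ Set.Icc a b, |(π v - P).eval x| ≤ Λ * ε := by
  set w : ℝ → ℝ := v - fun x => P.eval x
  have hw : IsBoundedIntegrable_s6 a b w := ⟨hv.sub (P.continuous.intervalIntegrable a b), ε, hε⟩
  have hπw : π v - P = π w := by
    rw [sub_eq_iff_eq_add, ← hπ.map_add_eval w hw P hP, sub_add_cancel]
  rw [hπw]
  exact ⟨hπ.natDegree_le w hw, hπ.abs_eval_le w hw ε hε⟩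

theorem exists_pow_mul_abs_iterate_derivative_projection_sub_le (q : ℕ) :
    ∃ K : ℝ, 0 ≤ K ∧ ∀ {Λ a b : ℝ}, a < b → ∀ {π : (ℝ → ℝ) → ℝ[X]},
      IsBoundedPolynomialProjection q Λ a b π → ∀ {v : ℝ → ℝ}, IntervalIntegrable v volume a b →
      ∀ {P : ℝ[X]}, P.natDegree ≤ q → ∀ {ε : ℝ}, (∀ x ∈ Set.Icc a b, |v x - P.eval x| ≤ ε) →
      ∀ p, ∀ s ∈ Set.Icc a b,
        (b - a) ^ p * |(derivative^[p] (π v)).eval s - (derivative^[p] P).eval s| ≤ K * Λ * ε := by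
  obtain ⟨K, hK, hinverse⟩ := exists_pow_mul_abs_iterate_derivative_eval_le q
  refine ⟨K, hK, fun {Λ a b} hab π hπ v hv P hP ε hε p s hs => ?_⟩
  obtain ⟨hdeg, hbound⟩ := hπ.natDegree_le_and_abs_eval_sub_le hv hP hε
  simpa only [iterate_derivative_sub, eval_sub, mul_assoc] using
    hinverse a b hab _ hdeg _ hbound p s hs

end Projection

theorem pow_mul_const_mul_add_const_mul_sum {k : ℝ} (hk : k ≠ 0) (C M : ℝ) (r p : ℕ) {ι : Type*}
    (s : Finset ι) (c : ℕ → ι → ℝ) :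
    k ^ p * (C * k ^ ((r : ℤ) + 1 - (p : ℤ)) * M +
        C * ∑ i ∈ s, ∑ m ∈ Finset.range (r + 1), k ^ ((m : ℤ) - (p : ℤ)) * c m i) =
      C * (∑ m ∈ Finset.range (r + 1), k ^ m * ∑ i ∈ s, c m i + k ^ (r + 1) * M) := by
  have hpow (m : ℕ) : k ^ p * k ^ ((m : ℤ) - (p : ℤ)) = k ^ m := by
    rw [← zpow_natCast, ← zpow_add₀ hk, add_sub_cancel, zpow_natCast]
  have htop : k ^ p * k ^ ((r : ℤ) + 1 - (p : ℤ)) = k ^ (r + 1) := mod_cast hpow (r + 1)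
  have hsum : k ^ p * ∑ i ∈ s, ∑ m ∈ Finset.range (r + 1), k ^ ((m : ℤ) - (p : ℤ)) * c m i =
      ∑ m ∈ Finset.range (r + 1), k ^ m * ∑ i ∈ s, c m i := by
    rw [Finset.sum_comm]
    simp only [Finset.mul_sum, ← mul_assoc, hpow]
  linear_combination C * M * htop + C * hsum

theorem piecewise_interpolation_estimate_general (q : ℕ) {Λ : ℝ} (hΛ : 0 ≤ Λ) :
    ∃ C : ℝ, 0 < C ∧ ∀ a b : ℝ, a < b →
      ∀ π : (ℝ → ℝ) → Polynomial ℝ, IsBoundedPolynomialProjection q Λ a b π →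
      ∀ (n : ℕ) (y : ℕ → ℝ) (g : ℕ → ℝ → ℝ) (v : ℝ → ℝ), y 0 = a → y (n + 1) = b →
        IsPiecewise n y g v →
        ∀ r ≤ q, (∀ j ≤ n, ContDiff ℝ (r + 1) (g j)) → ∀ p ≤ r + 1, ∀ M : ℝ,
          (∀ j ≤ n, ∀ s ∈ Set.Icc (y j) (y (j + 1)), |iteratedDeriv (r + 1) (g j) s| ≤ M) →
          ∀ j ≤ n, ∀ s ∈ Set.Icc (y j) (y (j + 1)),
            |((⇑Polynomial.derivative)^[p] (π v)).eval s - iteratedDeriv p (g j) s| ≤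
              C * (b - a) ^ ((r : ℤ) + 1 - (p : ℤ)) * M +
              C * ∑ i ∈ Finset.Icc 1 n, ∑ m ∈ Finset.range (r + 1),
                (b - a) ^ ((m : ℤ) - (p : ℤ)) * |jump y g m i| := by
  obtain ⟨K, hK, hprojection⟩ := exists_pow_mul_abs_iterate_derivative_projection_sub_le q
  refine ⟨K * Λ + 1, by positivity, ?_⟩
  rintro _ _ hab π hπ n y g v rfl rfl hv r hr hg p hp M hM j hj s hs
  set k := y (n + 1) - y 0
  have hk : 0 < k := sub_pos.mpr hab
  obtain ⟨P, hPdeg, hP⟩ :=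
    exists_polynomial_pow_mul_abs_iteratedDeriv_sub_le hk le_rfl hv.le_succ hg hM
  set T := ∑ m ∈ Finset.range (r + 1), k ^ m * ∑ i ∈ Finset.Icc 1 n, |jump y g m i| +
    k ^ (r + 1) * M with hT
  have hvP : ∀ x ∈ Set.Icc (y 0) (y (n + 1)), |v x - P.eval x| ≤ T := by
    intro x hx
    obtain ⟨i, hi, hxi, hvx⟩ := hv.exists_eq x hx
    simpa [hvx] using hP 0 (Nat.zero_le _) i hi x hxi
  have hvint := hv.intervalIntegrable fun i hi => (hg i hi).continuous
  rw [← mul_le_mul_iff_right₀ (pow_pos hk p), pow_mul_const_mul_add_const_mul_sum hk.ne', ← hT]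
  calc k ^ p * |((⇑Polynomial.derivative)^[p] (π v)).eval s - iteratedDeriv p (g j) s|
      ≤ k ^ p * (|((⇑Polynomial.derivative)^[p] (π v)).eval s -
          (Polynomial.derivative^[p] P).eval s| +
          |iteratedDeriv p (g j) s - (Polynomial.derivative^[p] P).eval s|) := by
        rw [abs_sub_comm (iteratedDeriv p (g j) s)]
        gcongr
        exact abs_sub_le _ _ _
    _ ≤ K * Λ * T + T := by
        rw [mul_add]
        exact add_le_add (hprojection hab hπ hvint (hPdeg.trans hr) hvP p s
          (Icc_nodes_subset hv.le_succ hj hs)) (hP p hp j hj s hs)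
    _ = (K * Λ + 1) * T := by ring

/-- Interpolation estimate for piecewise smooth functions (Lemma 5.2):
if `interp` is a linear interpolation operator into polynomials of degree at most `q`,
bounded by `Λ` and exact on polynomials of degree at most `q`, then there is
`C = C(q,Λ) > 0` such that for every `v : [a,b] → ℝ` which is piecewise `C^{q+1}`
with discontinuities at `a < x₁ < ⋯ < xₙ < b` (the pieces being given by globally
`C^{q+1}` functions `g 0, …, g n`, with the value of `v` at an interior node equal to
one of its one-sided limits), one has, for `p = 0, …, r+1` and `r = 0, …, q`,
`‖(interp v)^{(p)} - v^{(p)}‖ ≤ C k^{r+1-p} ‖v^{(r+1)}‖ + C ∑_{j=1}^{n} ∑_{m=0}^{r} k^{m-p} |[v^{(m)}]_{x_j}|`,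
where `k = b - a` and the jumps are `[v^{(m)}]_{x_j} = g_j^{(m)}(x_j) - g_{j-1}^{(m)}(x_j)`. -/
theorem piecewise_interpolation_estimate (q : ℕ) (Λ : ℝ) (hΛ : 0 < Λ) :
    ∃ C : ℝ, 0 < C ∧ ∀ (a b : ℝ), a < b →
      ∀ interp : (ℝ → ℝ) → Polynomial ℝ,
        (∀ v : ℝ → ℝ, IntervalIntegrable v volume a b →
            (∃ M : ℝ, ∀ x ∈ Set.Icc a b, |v x| ≤ M) →
            (interp v).natDegree ≤ q) →
        (∀ u v : ℝ → ℝ, IntervalIntegrable u volume a b →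
            (∃ M : ℝ, ∀ x ∈ Set.Icc a b, |u x| ≤ M) →
            IntervalIntegrable v volume a b →
            (∃ M : ℝ, ∀ x ∈ Set.Icc a b, |v x| ≤ M) →
            interp (u + v) = interp u + interp v) →
        (∀ (c : ℝ) (v : ℝ → ℝ), IntervalIntegrable v volume a b →
            (∃ M : ℝ, ∀ x ∈ Set.Icc a b, |v x| ≤ M) →
            interp (fun x => c * v x) = Polynomial.C c * interp v) →
        (∀ v : ℝ → ℝ, IntervalIntegrable v volume a b →
            (∃ M : ℝ, ∀ x ∈ Set.Icc a b, |v x| ≤ M) →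
            ∀ M : ℝ, (∀ x ∈ Set.Icc a b, |v x| ≤ M) →
              ∀ x ∈ Set.Icc a b, |(interp v).eval x| ≤ Λ * M) →
        (∀ P : Polynomial ℝ, P.natDegree ≤ q → interp (fun x => P.eval x) = P) →
        -- v piecewise C^{q+1} with nodes y 1 < ⋯ < y n in (a,b), pieces g 0, …, g n
        ∀ (n : ℕ) (y : ℕ → ℝ) (g : ℕ → ℝ → ℝ) (v : ℝ → ℝ),
          y 0 = a → y (n + 1) = b →
          (∀ j ≤ n, y j < y (j + 1)) →
          (∀ j ≤ n, ContDiff ℝ (q + 1) (g j)) →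
          (∀ j ≤ n, ∀ s ∈ Set.Ioo (y j) (y (j + 1)), v s = g j s) →
          v a = g 0 a → v b = g n b →
          (∀ j, 1 ≤ j → j ≤ n → v (y j) = g (j - 1) (y j) ∨ v (y j) = g j (y j)) →
          ∀ r ≤ q, ∀ p ≤ r + 1, ∀ Mr : ℝ,
            (∀ j ≤ n, ∀ s ∈ Set.Icc (y j) (y (j + 1)), |iteratedDeriv (r + 1) (g j) s| ≤ Mr) →
            ∀ j ≤ n, ∀ s ∈ Set.Icc (y j) (y (j + 1)),
              |((⇑Polynomial.derivative)^[p] (interp v)).eval s - iteratedDeriv p (g j) s| ≤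
                C * (b - a) ^ ((r : ℤ) + 1 - (p : ℤ)) * Mr +
                C * ∑ j' ∈ Finset.Icc 1 n, ∑ m ∈ Finset.range (r + 1),
                  (b - a) ^ ((m : ℤ) - (p : ℤ)) *
                    |iteratedDeriv m (g j') (y j') - iteratedDeriv m (g (j' - 1)) (y j')| := by
  obtain ⟨C, hC, hestimate⟩ := piecewise_interpolation_estimate_general q hΛ.le
  refine ⟨C, hC, fun a b hab interp hdeg hadd _ hbound hexact n y g v hya hyb hy hg hv hva hvb hvy
    r hr => ?_⟩
  have hinterp : IsBoundedPolynomialProjection q Λ a b interp :=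
    ⟨fun v hv => hdeg v hv.1 hv.2,
      fun v hv P hP => by
        have hPb := isBoundedIntegrable_of_continuous P.continuous a b
        rw [hadd v _ hv.1 hv.2 hPb.1 hPb.2, hexact P hP],
      fun v hv => hbound v hv.1 hv.2⟩
  have hpiecewise : IsPiecewise n y g v :=
    isPiecewise_of_eqOn_Ioo (fun j hj => (hy j hj).le) hv (hya ▸ hva) (hyb ▸ hvb) hvy
  exact hestimate a b hab interp hinterp n y g v hya hyb hpiecewise r hr fun j hj =>
    (hg j hj).of_le (by gcongr)
end

section
/- Let q ≥ 0 be an integer, Λ > 0, and let π be a linear operator mapping bounded integrable functions on [a,b] into polynomials of degree at most q with ‖πv‖_{L∞([a,b])} ≤ Λ·‖v‖_{L∞([a,b])} for all bounded integrable v and πv = v for every polynomial v of degree at most q. Then there is a constant C = C(q,Λ) > 0 such that for every v : [a,b] → ℝ that is piecewise C^{q+1} with discontinuities at a < x_1 < ⋯ < x_n < b, one has ‖(πv)^{(p)}‖ ≤ C·‖v^{(p)}‖ + C·Σ_{j=1}^{n} Σ_{m=0}^{p−1} k^{m−p}·|[v^{(m)}]_{x_j}| for all p = 0,…,q. -/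
open MeasureTheory

/-!
Subtract from `v` the Taylor polynomial `P` of degree `< p` of its first piece at `a`. Subtracting
`P` changes neither the jumps nor the `p`-th derivative, and the remainder `v - P` has vanishing
derivatives of order `< p` at `a`. Integrating `p` times from `a`, and picking up a jump at every
node, gives `|v - P| ≤ k ^ p * ‖v⁽ᵖ⁾‖ + ∑ m < p, k ^ m * ∑ j, |[v⁽ᵐ⁾]_{x_j}|`. The operator
reproduces `P`, so `(πv)⁽ᵖ⁾ = (π(v - P))⁽ᵖ⁾`; the stability of `π` followed by a Markov inequality,
which costs `k ^ (-p)`, yields the estimate.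
-/

section Polynomial

open Polynomial

theorem exists_norm_eval_derivative_le_of_isCompact {𝕜 : Type*} [NormedField 𝕜] {S : Set 𝕜}
    (hS : IsCompact S) (hS_inf : S.Infinite) (q : ℕ) :
    ∃ K : ℝ, ∀ Q : 𝕜[X], Q.natDegree ≤ q → ∀ M : ℝ, (∀ x ∈ S, ‖Q.eval x‖ ≤ M) →
      ∀ x ∈ S, ‖Q.derivative.eval x‖ ≤ K * M := by
  classical
  obtain ⟨t, htS, ht_card⟩ := hS_inf.exists_subset_card_eq (q + 1)
  let ℓ : 𝕜 → 𝕜[X] := Lagrange.basis t id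
  obtain ⟨K, hK⟩ := hS.exists_bound_of_continuousOn
    (f := fun x => ∑ i ∈ t, ‖(ℓ i).derivative.eval x‖) (by fun_prop)
  refine ⟨K, fun Q hQ M hM x hx => ?_⟩
  have hM_nonneg : 0 ≤ M := (norm_nonneg _).trans (hM x hx)
  have hQ_interpolate : Q = ∑ i ∈ t, C (Q.eval i) * ℓ i := by
    have hdeg : Q.degree < t.card := by
      rw [ht_card]
      exact degree_le_natDegree.trans_lt (by exact_mod_cast Nat.lt_succ_of_le hQ)
    simpa [Lagrange.interpolate_apply] using Lagrange.eq_interpolate (Set.injOn_id _) hdeg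
  calc ‖Q.derivative.eval x‖
      = ‖∑ i ∈ t, Q.eval i * (ℓ i).derivative.eval x‖ := by
        conv_lhs => rw [hQ_interpolate]
        simp [eval_finsetSum]
    _ ≤ ∑ i ∈ t, ‖Q.eval i * (ℓ i).derivative.eval x‖ := norm_sum_le _ _
    _ ≤ ∑ i ∈ t, M * ‖(ℓ i).derivative.eval x‖ := by
        gcongr with i hi
        rw [norm_mul]
        gcongr
        exact hM i (htS hi)
    _ = (∑ i ∈ t, ‖(ℓ i).derivative.eval x‖) * M := by rw [← Finset.mul_sum, mul_comm]
    _ ≤ K * M := by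
        gcongr
        exact (Real.le_norm_self _).trans (hK x hx)

theorem exists_mul_abs_eval_derivative_le (q : ℕ) :
    ∃ K : ℝ, ∀ a b : ℝ, a < b → ∀ Q : ℝ[X], Q.natDegree ≤ q →
      ∀ M : ℝ, (∀ x ∈ Set.Icc a b, |Q.eval x| ≤ M) →
        ∀ x ∈ Set.Icc a b, (b - a) * |Q.derivative.eval x| ≤ K * M := by
  obtain ⟨K, hK⟩ := exists_norm_eval_derivative_le_of_isCompact
    (isCompact_Icc (a := (0 : ℝ)) (b := 1)) (Set.Icc_infinite one_pos) q
  refine ⟨K, fun a b hab Q hQ M hM x hx => ?_⟩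
  have hk : 0 < b - a := sub_pos.2 hab
  let R : ℝ[X] := Q.comp (C (b - a) * X + C a)
  have hR_deg : R.natDegree ≤ q := by
    calc R.natDegree ≤ Q.natDegree * (C (b - a) * X + C a).natDegree := natDegree_comp_le
      _ ≤ Q.natDegree * 1 := Nat.mul_le_mul_left _ natDegree_linear_le
      _ ≤ q := by rwa [mul_one]
  have hR_bound : ∀ t ∈ Set.Icc (0 : ℝ) 1, ‖R.eval t‖ ≤ M := by
    intro t ht
    simp only [R, eval_comp, eval_add, eval_mul, eval_C, eval_X, Real.norm_eq_abs]
    exact hM _ ⟨by nlinarith [ht.1], by nlinarith [ht.2]⟩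
  have hx_unit : (x - a) / (b - a) ∈ Set.Icc (0 : ℝ) 1 :=
    ⟨div_nonneg (sub_nonneg.2 hx.1) hk.le, (div_le_one hk).2 (sub_le_sub_right hx.2 a)⟩
  have hx_affine : (b - a) * ((x - a) / (b - a)) + a = x := by
    rw [mul_div_cancel₀ _ hk.ne', sub_add_cancel]
  simpa [R, derivative_comp, hx_affine, abs_of_pos hk] using hK R hR_deg M hR_bound _ hx_unit

theorem exists_pow_mul_abs_eval_iterate_derivative_le (q : ℕ) :
    ∃ K : ℝ, 0 < K ∧ ∀ p ≤ q, ∀ a b : ℝ, a < b → ∀ Q : ℝ[X], Q.natDegree ≤ q →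
      ∀ M : ℝ, (∀ x ∈ Set.Icc a b, |Q.eval x| ≤ M) →
        ∀ x ∈ Set.Icc a b, (b - a) ^ p * |(derivative^[p] Q).eval x| ≤ K * M := by
  obtain ⟨K, hK⟩ := exists_mul_abs_eval_derivative_le q
  refine ⟨max K 1 ^ q, by positivity, fun p hp a b hab Q hQ M hM x hx => ?_⟩
  have hk : 0 < b - a := sub_pos.2 hab
  have hM_nonneg : 0 ≤ M := (abs_nonneg _).trans (hM x hx)
  have iterated : ∀ r : ℕ, ∀ z ∈ Set.Icc a b,
      |(b - a) ^ r * (derivative^[r] Q).eval z| ≤ max K 1 ^ r * M := by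
    intro r
    induction r with
    | zero => simpa using hM
    | succ r ih =>
      intro z hz
      have hdeg : (C ((b - a) ^ r) * derivative^[r] Q).natDegree ≤ q :=
        (natDegree_C_mul_le _ _).trans
          ((natDegree_iterate_derivative Q r).trans ((Nat.sub_le _ _).trans hQ))
      calc |(b - a) ^ (r + 1) * (derivative^[r + 1] Q).eval z|
          = (b - a) * |(C ((b - a) ^ r) * derivative^[r] Q).derivative.eval z| := by
            rw [derivative_C_mul, eval_C_mul, Function.iterate_succ_apply', pow_succ', mul_assoc,
              abs_mul, abs_of_pos hk]
        _ ≤ K * (max K 1 ^ r * M) := hK a b hab _ hdeg _ (by simpa using ih) z hz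
        _ ≤ max K 1 * (max K 1 ^ r * M) := by gcongr; exact le_max_left K 1
        _ = max K 1 ^ (r + 1) * M := by ring
  calc (b - a) ^ p * |(derivative^[p] Q).eval x|
      = |(b - a) ^ p * (derivative^[p] Q).eval x| := by rw [abs_mul, abs_of_pos (pow_pos hk p)]
    _ ≤ max K 1 ^ p * M := iterated p x hx
    _ ≤ max K 1 ^ q * M := by gcongr; exact le_max_right K 1

theorem exists_degree_lt_forall_eval_iterate_derivative_eq {F : Type*} [Field F] [CharZero F]
    (a : F) (c : ℕ → F) (p : ℕ) :
    ∃ P : F[X], P.degree < p ∧ ∀ m < p, (derivative^[m] P).eval a = c m := by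
  classical
  let T : F[X] := ofFn p fun i : Fin p => c i / (i : ℕ).factorial
  refine ⟨taylor (-a) T, by simpa only [degree_taylor] using ofFn_degree_lt _, fun m hm => ?_⟩
  have hcoeff : (hasseDeriv m (taylor (-a) T)).eval a = c m / m.factorial := by
    rw [← taylor_coeff, taylor_taylor, add_neg_cancel, taylor_zero]
    exact ofFn_coeff_eq_val_of_lt _ hm
  rw [← factorial_smul_hasseDeriv]
  simp [hcoeff, mul_div_cancel₀ _ (Nat.cast_ne_zero.2 m.factorial_ne_zero : (m.factorial : F) ≠ 0)]

theorem iteratedDeriv_polynomial_eval {𝕜 : Type*} [NontriviallyNormedField 𝕜] (P : 𝕜[X])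
    (m : ℕ) :
    iteratedDeriv m (fun x => P.eval x) = fun x => (derivative^[m] P).eval x := by
  induction m with
  | zero => simp
  | succ m ih =>
    ext x
    rw [iteratedDeriv_succ, ih, Polynomial.deriv, Function.iterate_succ_apply']

end Polynomial

section Jump

variable {E : Type*} [NormedAddCommGroup E] [NormedSpace ℝ E]

/-- The jump at the node `y j` of the `m`-th derivative of the piecewise function which equals `g j`
on `[y j, y (j + 1)]`. It is meaningful for `1 ≤ j` only: at `j = 0` the truncated `j - 1` makes
it zero. -/
noncomputable def nodeJump (y : ℕ → ℝ) (g : ℕ → ℝ → E) (m j : ℕ) : E :=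
  iteratedDeriv m (g j) (y j) - iteratedDeriv m (g (j - 1)) (y j)

theorem nodeJump_deriv (y : ℕ → ℝ) (g : ℕ → ℝ → E) (m j : ℕ) :
    nodeJump y (fun i => deriv (g i)) m j = nodeJump y g (m + 1) j := by
  simp only [nodeJump, iteratedDeriv_succ']

theorem nodeJump_sub {y : ℕ → ℝ} {g : ℕ → ℝ → E} {h : ℝ → E} {m j : ℕ}
    (hg : ContDiff ℝ m (g j)) (hg_pred : ContDiff ℝ m (g (j - 1))) (hh : ContDiff ℝ m h) :
    nodeJump y (fun i x => g i x - h x) m j = nodeJump y g m j := by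
  simp only [nodeJump]
  rw [iteratedDeriv_fun_sub hg.contDiffAt hh.contDiffAt,
    iteratedDeriv_fun_sub hg_pred.contDiffAt hh.contDiffAt, sub_sub_sub_cancel_right]

variable {n : ℕ} {y : ℕ → ℝ}

theorem norm_le_mul_sub_add_sum_norm_nodeJump (hy : MonotoneOn y (Set.Iic (n + 1)))
    {f : ℕ → ℝ → E} (hf : ∀ j ≤ n, Differentiable ℝ (f j)) (hf_zero : f 0 (y 0) = 0) {D : ℝ}
    (hD : ∀ j ≤ n, ∀ s ∈ Set.Icc (y j) (y (j + 1)), ‖deriv (f j) s‖ ≤ D) :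
    ∀ j ≤ n, ∀ s ∈ Set.Icc (y j) (y (j + 1)),
      ‖f j s‖ ≤ D * (s - y 0) + ∑ i ∈ Finset.Icc 1 j, ‖nodeJump y f 0 i‖ := by
  have increment_le : ∀ j ≤ n, ∀ s ∈ Set.Icc (y j) (y (j + 1)),
      ‖f j s - f j (y j)‖ ≤ D * (s - y j) := fun j hj =>
    norm_image_sub_le_of_norm_deriv_le_segment'
      (fun x _ => (hf j hj x).hasDerivAt.hasDerivWithinAt)
      (fun x hx => hD j hj x (Set.Ico_subset_Icc_self hx))
  intro j
  induction j with
  | zero => simpa [hf_zero] using increment_le 0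
  | succ j ih =>
    intro hj s hs
    have hy_le : y j ≤ y (j + 1) :=
      hy (Set.mem_Iic.2 (by omega)) (Set.mem_Iic.2 (by omega)) j.le_succ
    have left_limit_le := ih (by omega) (y (j + 1)) (Set.right_mem_Icc.2 hy_le)
    rw [Finset.sum_Icc_succ_top (by omega)]
    calc ‖f (j + 1) s‖
        = ‖(f (j + 1) s - f (j + 1) (y (j + 1))) + f j (y (j + 1)) + nodeJump y f 0 (j + 1)‖ := by
          simp [nodeJump]
      _ ≤ ‖f (j + 1) s - f (j + 1) (y (j + 1))‖ + ‖f j (y (j + 1))‖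
            + ‖nodeJump y f 0 (j + 1)‖ := norm_add₃_le
      _ ≤ _ := by linarith [increment_le (j + 1) hj s hs]

theorem norm_le_pow_mul_add_sum_norm_nodeJump (hy : MonotoneOn y (Set.Iic (n + 1))) {p : ℕ}
    {f : ℕ → ℝ → E} (hf : ∀ j ≤ n, ContDiff ℝ p (f j))
    (hf_zero : ∀ m < p, iteratedDeriv m (f 0) (y 0) = 0) {M : ℝ}
    (hM : ∀ j ≤ n, ∀ s ∈ Set.Icc (y j) (y (j + 1)), ‖iteratedDeriv p (f j) s‖ ≤ M) :
    ∀ j ≤ n, ∀ s ∈ Set.Icc (y j) (y (j + 1)),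
      ‖f j s‖ ≤ (y (n + 1) - y 0) ^ p * M +
        ∑ m ∈ Finset.range p,
          (y (n + 1) - y 0) ^ m * ∑ i ∈ Finset.Icc 1 n, ‖nodeJump y f m i‖ := by
  set k := y (n + 1) - y 0
  induction p generalizing f with
  | zero => simpa using hM
  | succ p ih =>
    intro j hj s hs
    set D := k ^ p * M +
      ∑ m ∈ Finset.range p, k ^ m * ∑ i ∈ Finset.Icc 1 n, ‖nodeJump y f (m + 1) i‖ with hD
    have deriv_le : ∀ j ≤ n, ∀ s ∈ Set.Icc (y j) (y (j + 1)), ‖deriv (f j) s‖ ≤ D := by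
      simpa only [nodeJump_deriv] using ih
        (fun j hj => (contDiff_succ_iff_deriv.1 (by exact_mod_cast hf j hj)).2.2)
        (fun m hm => by simpa only [iteratedDeriv_succ'] using hf_zero (m + 1) (by omega))
        (by simpa only [iteratedDeriv_succ'] using hM)
    have hD_nonneg : 0 ≤ D := (norm_nonneg _).trans (deriv_le j hj s hs)
    have hs_le : s - y 0 ≤ k :=
      sub_le_sub_right (hs.2.trans (hy (Set.mem_Iic.2 (by omega)) (by simp) (by omega))) _
    calc ‖f j s‖
        ≤ D * (s - y 0) + ∑ i ∈ Finset.Icc 1 j, ‖nodeJump y f 0 i‖ :=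
          norm_le_mul_sub_add_sum_norm_nodeJump hy
            (fun j hj => (hf j hj).differentiable (by simp))
            (by simpa using hf_zero 0 p.succ_pos) deriv_le j hj s hs
      _ ≤ D * k + ∑ i ∈ Finset.Icc 1 n, ‖nodeJump y f 0 i‖ := by gcongr
      _ = _ := by
          rw [hD, Finset.sum_range_succ', add_mul, Finset.sum_mul]
          simp only [pow_succ, pow_zero, one_mul, mul_right_comm, ← add_assoc]

end Jump

/-- `v` is piecewise `C^p` on `[y 0, y (n + 1)]` with pieces `g 0, …, g n` and interior nodes
`y 1, …, y n`; the pieces are globally `C^p`, and at a node `v` takes one of its one-sided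
limits. -/
structure IsPiecewiseContDiff {E : Type*} [NormedAddCommGroup E] [NormedSpace ℝ E]
    (p n : ℕ) (y : ℕ → ℝ) (g : ℕ → ℝ → E) (v : ℝ → E) : Prop where
  strictMonoOn : StrictMonoOn y (Set.Iic (n + 1))
  contDiff : ∀ j ≤ n, ContDiff ℝ p (g j)
  eqOn : ∀ j ≤ n, Set.EqOn v (g j) (Set.Ioo (y j) (y (j + 1)))
  eq_left : v (y 0) = g 0 (y 0)
  eq_right : v (y (n + 1)) = g n (y (n + 1))
  eq_node : ∀ j, 1 ≤ j → j ≤ n → v (y j) = g (j - 1) (y j) ∨ v (y j) = g j (y j)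

namespace IsPiecewiseContDiff

variable {E : Type*} [NormedAddCommGroup E] [NormedSpace ℝ E]
  {p n : ℕ} {y : ℕ → ℝ} {g : ℕ → ℝ → E} {v : ℝ → E}

theorem node_lt_succ (hv : IsPiecewiseContDiff p n y g v) {j : ℕ} (hj : j ≤ n) :
    y j < y (j + 1) :=
  hv.strictMonoOn (Set.mem_Iic.2 (by omega)) (Set.mem_Iic.2 (by omega)) j.lt_succ_self

theorem exists_piece (hv : IsPiecewiseContDiff p n y g v) {s : ℝ}
    (hs : s ∈ Set.Icc (y 0) (y (n + 1))) :
    ∃ j ≤ n, s ∈ Set.Icc (y j) (y (j + 1)) ∧ v s = g j s := by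
  rcases hs.1.eq_or_lt with rfl | h_left
  · exact ⟨0, n.zero_le, ⟨le_rfl, (hv.node_lt_succ n.zero_le).le⟩, hv.eq_left⟩
  obtain ⟨j, hj, hjs, hsj⟩ : ∃ j ≤ n, y j < s ∧ s ≤ y (j + 1) := by
    by_contra! h
    have : ∀ j ≤ n + 1, y j < s := fun j => by
      induction j with
      | zero => exact fun _ => h_left
      | succ j ih => exact fun hj => h j (by omega) (ih (by omega))
    exact hs.2.not_gt (this (n + 1) le_rfl)
  rcases hsj.eq_or_lt with rfl | h_right
  · rcases hj.eq_or_lt with rfl | hjn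
    · exact ⟨j, le_rfl, ⟨hjs.le, le_rfl⟩, hv.eq_right⟩
    · rcases hv.eq_node (j + 1) (by omega) hjn with h | h
      · exact ⟨j, hj, ⟨hjs.le, le_rfl⟩, h⟩
      · exact ⟨j + 1, hjn, ⟨le_rfl, (hv.node_lt_succ hjn).le⟩, h⟩
  · exact ⟨j, hj, ⟨hjs.le, h_right.le⟩, hv.eqOn j hj ⟨hjs, h_right⟩⟩

theorem intervalIntegrable (hv : IsPiecewiseContDiff p n y g v) :
    IntervalIntegrable v volume (y 0) (y (n + 1)) := by
  refine IntervalIntegrable.trans_iterate fun j hj => ?_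
  have hj : j ≤ n := Nat.lt_succ_iff.1 hj
  refine ((hv.contDiff j hj).continuous.intervalIntegrable _ _).congr_uIoo ?_
  rw [Set.uIoo_of_le (hv.node_lt_succ hj).le]
  exact (hv.eqOn j hj).symm

theorem exists_polynomial_abs_sub_le {g : ℕ → ℝ → ℝ} {v : ℝ → ℝ}
    (hv : IsPiecewiseContDiff p n y g v) {M : ℝ}
    (hM : ∀ j ≤ n, ∀ s ∈ Set.Icc (y j) (y (j + 1)), |iteratedDeriv p (g j) s| ≤ M) :
    ∃ P : Polynomial ℝ, P.degree < p ∧ ∀ s ∈ Set.Icc (y 0) (y (n + 1)),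
      |v s - P.eval s| ≤ (y (n + 1) - y 0) ^ p * M +
        ∑ m ∈ Finset.range p,
          (y (n + 1) - y 0) ^ m * ∑ j ∈ Finset.Icc 1 n, |nodeJump y g m j| := by
  obtain ⟨P, hP_deg, hP_taylor⟩ := exists_degree_lt_forall_eval_iterate_derivative_eq (y 0)
    (fun m => iteratedDeriv m (g 0) (y 0)) p
  refine ⟨P, hP_deg, fun s hs => ?_⟩
  have hP_contDiff (m : ℕ) : ContDiff ℝ m fun x => P.eval x := by
    simpa using P.contDiff_aeval (𝕜 := ℝ) m
  have iteratedDeriv_remainder : ∀ m ≤ p, ∀ j ≤ n, ∀ x,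
      iteratedDeriv m (fun x => g j x - P.eval x) x =
        iteratedDeriv m (g j) x - ((⇑Polynomial.derivative)^[m] P).eval x := by
    intro m hm j hj x
    rw [iteratedDeriv_fun_sub ((hv.contDiff j hj).of_le (by exact_mod_cast hm)).contDiffAt
      (hP_contDiff m).contDiffAt, iteratedDeriv_polynomial_eval]
  have jump_eq : ∀ m ∈ Finset.range p, ∀ j ∈ Finset.Icc 1 n,
      nodeJump y (fun j x => g j x - P.eval x) m j = nodeJump y g m j := by
    intro m hm j hj
    have hmp : (m : WithTop ℕ∞) ≤ p := by exact_mod_cast (Finset.mem_range.1 hm).le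
    have hjn := (Finset.mem_Icc.1 hj).2
    exact nodeJump_sub ((hv.contDiff j hjn).of_le hmp)
      ((hv.contDiff (j - 1) (by omega)).of_le hmp) (hP_contDiff m)
  obtain ⟨j, hj, hsj, hvs⟩ := hv.exists_piece hs
  have taylor_remainder_le := norm_le_pow_mul_add_sum_norm_nodeJump
    hv.strictMonoOn.monotoneOn (fun j hj => (hv.contDiff j hj).sub (hP_contDiff p))
    (fun m hm => by
      rw [iteratedDeriv_remainder m hm.le 0 n.zero_le, hP_taylor m hm, sub_self])
    (fun j hj s hs => by
      rw [iteratedDeriv_remainder p le_rfl j hj,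
        Polynomial.iterate_derivative_eq_zero_of_degree_lt hP_deg, Polynomial.eval_zero, sub_zero]
      exact hM j hj s hs) j hj s hsj
  rw [hvs]
  refine taylor_remainder_le.trans_eq (congrArg _ (Finset.sum_congr rfl fun m hm => ?_))
  exact congrArg _ (Finset.sum_congr rfl fun j hj => congrArg _ (jump_eq m hm j hj))

end IsPiecewiseContDiff

/-- Membership of `v` in the space of bounded integrable functions on `[a, b]`, on which
interpolation operators act. -/
structure IsBoundedIntegrable_s7 (a b : ℝ) (v : ℝ → ℝ) : Prop where
  intervalIntegrable : IntervalIntegrable v volume a b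
  bounded : ∃ M : ℝ, ∀ x ∈ Set.Icc a b, |v x| ≤ M

theorem isBoundedIntegrable_of_continuous_s7 {v : ℝ → ℝ} (hv : Continuous v) (a b : ℝ) :
    IsBoundedIntegrable_s7 a b v :=
  ⟨hv.intervalIntegrable a b, isCompact_Icc.exists_bound_of_continuousOn hv.continuousOn⟩

/-- `interp` is an additive operator from bounded integrable functions on `[a, b]` to polynomials of
degree at most `q`, with sup-norm bound `Λ`, which reproduces the polynomials of degree
less than `r`. Its values on other functions are unconstrained. -/
structure IsPolynomialInterpolation (a b Λ : ℝ) (q r : ℕ) (interp : (ℝ → ℝ) → Polynomial ℝ) :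
    Prop where
  natDegree_le : ∀ v, IsBoundedIntegrable_s7 a b v → (interp v).natDegree ≤ q
  map_add : ∀ u v, IsBoundedIntegrable_s7 a b u → IsBoundedIntegrable_s7 a b v →
    interp (u + v) = interp u + interp v
  abs_eval_le : ∀ v, IsBoundedIntegrable_s7 a b v → ∀ M : ℝ, (∀ x ∈ Set.Icc a b, |v x| ≤ M) →
    ∀ x ∈ Set.Icc a b, |(interp v).eval x| ≤ Λ * M
  map_polynomial : ∀ P : Polynomial ℝ, P.degree < r → interp (fun x => P.eval x) = P

theorem IsPolynomialInterpolation.eq_map_sub_add {a b Λ : ℝ} {q r : ℕ}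
    {interp : (ℝ → ℝ) → Polynomial ℝ} (hinterp : IsPolynomialInterpolation a b Λ q r interp)
    {v : ℝ → ℝ} {P : Polynomial ℝ} (hP : P.degree < r)
    (hvP : IsBoundedIntegrable_s7 a b fun x => v x - P.eval x) :
    interp v = interp (fun x => v x - P.eval x) + P := by
  have hadd := hinterp.map_add _ _ hvP (isBoundedIntegrable_of_continuous_s7 P.continuous a b)
  rw [hinterp.map_polynomial P hP] at hadd
  rw [← hadd]
  congr 1
  ext x
  simp

theorem pow_mul_sum_sum_zpow_sub {F ι : Type*} [Field F] {k : F} (hk : k ≠ 0) (p : ℕ)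
    (s : Finset ι) (t : Finset ℕ) (c : ℕ → ι → F) :
    k ^ p * ∑ j ∈ s, ∑ m ∈ t, k ^ ((m : ℤ) - (p : ℤ)) * c m j =
      ∑ m ∈ t, k ^ m * ∑ j ∈ s, c m j := by
  rw [Finset.sum_comm]
  simp only [Finset.mul_sum, ← mul_assoc]
  refine Finset.sum_congr rfl fun m _ => Finset.sum_congr rfl fun j _ => ?_
  rw [zpow_sub₀ hk, zpow_natCast, zpow_natCast, mul_div_cancel₀ _ (pow_ne_zero p hk)]

theorem piecewise_interpolant_derivative_estimate_general (q : ℕ) (Λ : ℝ) (hΛ : 0 < Λ) :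
    ∃ C : ℝ, 0 < C ∧ ∀ p ≤ q, ∀ (n : ℕ) (y : ℕ → ℝ) (g : ℕ → ℝ → ℝ) (v : ℝ → ℝ),
      IsPiecewiseContDiff p n y g v →
      ∀ interp : (ℝ → ℝ) → Polynomial ℝ,
        IsPolynomialInterpolation (y 0) (y (n + 1)) Λ q p interp →
        ∀ M : ℝ,
          (∀ j ≤ n, ∀ s ∈ Set.Icc (y j) (y (j + 1)), |iteratedDeriv p (g j) s| ≤ M) →
          ∀ s ∈ Set.Icc (y 0) (y (n + 1)),
            |((⇑Polynomial.derivative)^[p] (interp v)).eval s| ≤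
              C * M + C * ∑ j ∈ Finset.Icc 1 n, ∑ m ∈ Finset.range p,
                (y (n + 1) - y 0) ^ ((m : ℤ) - (p : ℤ)) * |nodeJump y g m j| := by
  obtain ⟨K, hK, markov⟩ := exists_pow_mul_abs_eval_iterate_derivative_le q
  refine ⟨K * Λ, mul_pos hK hΛ, fun p hp n y g v hv interp hinterp M hM s hs => ?_⟩
  have hy : y 0 < y (n + 1) := hv.strictMonoOn (by simp) (by simp) n.succ_pos
  have hk : 0 < y (n + 1) - y 0 := sub_pos.2 hy
  obtain ⟨P, hP_deg, hvP_le⟩ := hv.exists_polynomial_abs_sub_le hM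
  have hvP : IsBoundedIntegrable_s7 (y 0) (y (n + 1)) fun x => v x - P.eval x :=
    ⟨hv.intervalIntegrable.sub (P.continuous.intervalIntegrable _ _), _, hvP_le⟩
  rw [hinterp.eq_map_sub_add hP_deg hvP, iterate_map_add,
    Polynomial.iterate_derivative_eq_zero_of_degree_lt hP_deg, add_zero]
  refine le_of_mul_le_mul_left ?_ (pow_pos hk p)
  refine (markov p hp _ _ hy _ (hinterp.natDegree_le _ hvP) _
    (hinterp.abs_eval_le _ hvP _ hvP_le) s hs).trans_eq ?_
  rw [← pow_mul_sum_sum_zpow_sub hk.ne']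
  ring

/-- Derivative estimate for the interpolant of a piecewise smooth function (Lemma 5.3):
if `interp` is a linear interpolation operator into polynomials of degree at most `q`,
bounded by `Λ` and exact on polynomials of degree at most `q`, then there is
`C = C(q,Λ) > 0` such that for every `v : [a,b] → ℝ` which is piecewise `C^{q+1}`
with discontinuities at `a < x₁ < ⋯ < xₙ < b` (pieces given by globally `C^{q+1}`
functions `g 0, …, g n`, the value of `v` at an interior node being one of its
one-sided limits), one has, for `p = 0, …, q`,
`‖(interp v)^{(p)}‖ ≤ C ‖v^{(p)}‖ + C ∑_{j=1}^{n} ∑_{m=0}^{p-1} k^{m-p} |[v^{(m)}]_{x_j}|`,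
where `k = b - a` and `[v^{(m)}]_{x_j} = g_j^{(m)}(x_j) - g_{j-1}^{(m)}(x_j)`. -/
theorem piecewise_interpolant_derivative_estimate (q : ℕ) (Λ : ℝ) (hΛ : 0 < Λ) :
    ∃ C : ℝ, 0 < C ∧ ∀ (a b : ℝ), a < b →
      ∀ interp : (ℝ → ℝ) → Polynomial ℝ,
        (∀ v : ℝ → ℝ, IntervalIntegrable v volume a b →
            (∃ M : ℝ, ∀ x ∈ Set.Icc a b, |v x| ≤ M) →
            (interp v).natDegree ≤ q) →
        (∀ u v : ℝ → ℝ, IntervalIntegrable u volume a b →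
            (∃ M : ℝ, ∀ x ∈ Set.Icc a b, |u x| ≤ M) →
            IntervalIntegrable v volume a b →
            (∃ M : ℝ, ∀ x ∈ Set.Icc a b, |v x| ≤ M) →
            interp (u + v) = interp u + interp v) →
        (∀ (c : ℝ) (v : ℝ → ℝ), IntervalIntegrable v volume a b →
            (∃ M : ℝ, ∀ x ∈ Set.Icc a b, |v x| ≤ M) →
            interp (fun x => c * v x) = Polynomial.C c * interp v) →
        (∀ v : ℝ → ℝ, IntervalIntegrable v volume a b →
            (∃ M : ℝ, ∀ x ∈ Set.Icc a b, |v x| ≤ M) →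
            ∀ M : ℝ, (∀ x ∈ Set.Icc a b, |v x| ≤ M) →
              ∀ x ∈ Set.Icc a b, |(interp v).eval x| ≤ Λ * M) →
        (∀ P : Polynomial ℝ, P.natDegree ≤ q → interp (fun x => P.eval x) = P) →
        ∀ (n : ℕ) (y : ℕ → ℝ) (g : ℕ → ℝ → ℝ) (v : ℝ → ℝ),
          y 0 = a → y (n + 1) = b →
          (∀ j ≤ n, y j < y (j + 1)) →
          (∀ j ≤ n, ContDiff ℝ (q + 1) (g j)) →
          (∀ j ≤ n, ∀ s ∈ Set.Ioo (y j) (y (j + 1)), v s = g j s) →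
          v a = g 0 a → v b = g n b →
          (∀ j, 1 ≤ j → j ≤ n → v (y j) = g (j - 1) (y j) ∨ v (y j) = g j (y j)) →
          ∀ p ≤ q, ∀ Mp : ℝ,
            (∀ j ≤ n, ∀ s ∈ Set.Icc (y j) (y (j + 1)), |iteratedDeriv p (g j) s| ≤ Mp) →
            ∀ s ∈ Set.Icc a b,
              |((⇑Polynomial.derivative)^[p] (interp v)).eval s| ≤
                C * Mp +
                C * ∑ j' ∈ Finset.Icc 1 n, ∑ m ∈ Finset.range p,
                  (b - a) ^ ((m : ℤ) - (p : ℤ)) *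
                    |iteratedDeriv m (g j') (y j') - iteratedDeriv m (g (j' - 1)) (y j')| := by
  obtain ⟨C, hC, estimate⟩ := piecewise_interpolant_derivative_estimate_general q Λ hΛ
  refine ⟨C, hC, ?_⟩
  rintro _ _ - interp hdeg hadd - hbound hpoly n y g v rfl rfl hy hg hv hv_left hv_right hv_node
    p hp
  refine estimate p hp n y g v
    ⟨strictMonoOn_Iic_of_lt_succ fun j hj => hy j (Nat.lt_succ_iff.1 hj),
      fun j hj => (hg j hj).of_le (by exact_mod_cast hp.trans q.le_succ), hv, hv_left, hv_right,
      hv_node⟩ interp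
    ⟨fun v hv => hdeg v hv.1 hv.2, fun u v hu hv => hadd u v hu.1 hu.2 hv.1 hv.2,
      fun v hv => hbound v hv.1 hv.2, fun P hP => hpoly P ?_⟩
  exact Polynomial.natDegree_le_of_degree_le (hP.le.trans (by exact_mod_cast hp))
end

section
/- Let p ≥ 0 be an integer, let v : ℝ^N → ℝ be p times continuously differentiable, let x : ℝ → ℝ^N be p times differentiable, and let C_x > 0 be a constant such that ‖x^{(n)}‖_{L∞(ℝ, l∞)} ≤ C_x^n for n = 1,…,p. Then there is a constant C = C(p) > 0, independent of N, v, x, and C_x, such that ‖d^p(v∘x)/dt^p‖_{L∞(ℝ)} ≤ C·‖v‖_{D^p(ℝ^N)}·C_x^p. -/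
/-!
Faà di Bruno's formula writes the `n`-th derivative of `g ∘ f` along a curve `f` as a sum over the
partitions of an `n`-element set, a partition into blocks of sizes `n₁, …, nₘ` contributing
`Dᵐg (f x) [f⁽ⁿ¹⁾(x), …, f⁽ⁿᵐ⁾(x)]`. If the derivatives of `g` are bounded by `D` and
`f⁽ᵏ⁾(x)` by `C ^ k`, then each such term has norm at most `D * C ^ n`, since `n₁ + ⋯ + nₘ = n`. So
the number of partitions, the `n`-th Bell number, serves as the constant.

Mathlib's version of the formula needs `f` to be `C^n`, whereas here the `n`-th derivative of `f`
need not be continuous. The induction behind the formula only uses differentiability.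
-/

section FaaDiBruno

variable {𝕜 E F : Type*} [NontriviallyNormedField 𝕜]
  [NormedAddCommGroup E] [NormedSpace 𝕜 E] [NormedAddCommGroup F] [NormedSpace 𝕜 F]
  {f : 𝕜 → E} {g : E → F} {n : ℕ}

/-- The term of Faà di Bruno's formula for `iteratedDeriv n (g ∘ f) x` that belongs to the
partition `c` of `Fin n`: the derivative of `g` of order the number of blocks, applied to the
derivatives of `f` of orders the block sizes. -/
noncomputable def faaDiBrunoTerm (g : E → F) (f : 𝕜 → E) (c : OrderedFinpartition n) (x : 𝕜) : F :=
  iteratedFDeriv 𝕜 c.length g (f x) fun i ↦ iteratedDeriv (c.partSize i) f x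

theorem faaDiBrunoTerm_extendLeft (c : OrderedFinpartition n) (x : 𝕜) :
    faaDiBrunoTerm g f c.extendLeft x =
      fderiv 𝕜 (iteratedFDeriv 𝕜 c.length g) (f x) (deriv f x)
        fun i ↦ iteratedDeriv (c.partSize i) f x := by
  rw [← iteratedDeriv_one]
  rfl

theorem faaDiBrunoTerm_extendMiddle (c : OrderedFinpartition n) (i : Fin c.length) (x : 𝕜) :
    faaDiBrunoTerm g f (c.extendMiddle i) x =
      iteratedFDeriv 𝕜 c.length g (f x)
        (Function.update (fun j ↦ iteratedDeriv (c.partSize j) f x) i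
          (iteratedDeriv (c.partSize i + 1) f x)) := by
  have orders_update : (fun j ↦ iteratedDeriv ((c.extendMiddle i).partSize j) f x) =
      Function.update (fun j ↦ iteratedDeriv (c.partSize j) f x) i
        (iteratedDeriv (c.partSize i + 1) f x) :=
    funext fun j ↦ Function.apply_update (fun _ k ↦ iteratedDeriv k f x) _ _ _ j
  exact congrArg (iteratedFDeriv 𝕜 c.length g (f x)) orders_update

/-- Differentiating the derivative of `g` adjoins the new index as a singleton block, and
differentiating the `i`-th derivative of `f` adds it to the `i`-th block. -/
theorem hasDerivAt_faaDiBrunoTerm {c : OrderedFinpartition n} {x : 𝕜}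
    (hg : DifferentiableAt 𝕜 (iteratedFDeriv 𝕜 c.length g) (f x)) (hf : DifferentiableAt 𝕜 f x)
    (hf_parts : ∀ i, DifferentiableAt 𝕜 (iteratedDeriv (c.partSize i) f) x) :
    HasDerivAt (faaDiBrunoTerm g f c) (∑ o, faaDiBrunoTerm g f (c.extend o) x) x := by
  have product_rule :=
    ((hg.hasFDerivAt.comp x hf.hasFDerivAt).continuousMultilinearMap_apply
      fun i ↦ (hf_parts i).hasFDerivAt).hasDerivAt
  convert! product_rule using 1
  simp [Fintype.sum_option, faaDiBrunoTerm_extendLeft, faaDiBrunoTerm_extendMiddle,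
    iteratedDeriv_succ]

theorem iteratedDeriv_vcomp_eq_sum_faaDiBrunoTerm
    (hg : ∀ k < n, Differentiable 𝕜 (iteratedFDeriv 𝕜 k g))
    (hf : ∀ k < n, Differentiable 𝕜 (iteratedDeriv k f)) :
    iteratedDeriv n (g ∘ f) = fun x ↦ ∑ c : OrderedFinpartition n, faaDiBrunoTerm g f c x := by
  induction n with
  | zero =>
    ext x
    rw [iteratedDeriv_zero, Fintype.sum_unique]
    rfl
  | succ n ih =>
    have hf_zero : Differentiable 𝕜 f := by simpa using hf 0 n.succ_pos
    have sum_extend (x : 𝕜) :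
        ∑ c : OrderedFinpartition n, ∑ o, faaDiBrunoTerm g f (c.extend o) x =
          ∑ c : OrderedFinpartition (n + 1), faaDiBrunoTerm g f c x := by
      rw [← (OrderedFinpartition.extendEquiv n).sum_comp, Fintype.sum_sigma]
      rfl
    have term_hasDerivAt (c : OrderedFinpartition n) (x : 𝕜) :
        HasDerivAt (faaDiBrunoTerm g f c) (∑ o, faaDiBrunoTerm g f (c.extend o) x) x :=
      hasDerivAt_faaDiBrunoTerm (hg _ (Nat.lt_succ_of_le c.length_le) (f x)) (hf_zero x)
        fun i ↦ hf _ (Nat.lt_succ_of_le (c.partSize_le i)) x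
    have formula_n := ih (fun k hk ↦ hg k (hk.trans n.lt_succ_self))
      fun k hk ↦ hf k (hk.trans n.lt_succ_self)
    ext x
    rw [iteratedDeriv_succ, formula_n, ← sum_extend]
    exact (HasDerivAt.fun_sum fun c _ ↦ term_hasDerivAt c x).deriv

theorem sum_partSize (c : OrderedFinpartition n) : ∑ i, c.partSize i = n := by
  simpa using c.sum_sigma_eq_sum fun _ ↦ (1 : ℕ)

theorem norm_faaDiBrunoTerm_le {x : 𝕜} {C D : ℝ} (c : OrderedFinpartition n)
    (hg : ‖iteratedFDeriv 𝕜 c.length g (f x)‖ ≤ D)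
    (hf : ∀ i, ‖iteratedDeriv (c.partSize i) f x‖ ≤ C ^ c.partSize i) :
    ‖faaDiBrunoTerm g f c x‖ ≤ D * C ^ n :=
  calc
    ‖faaDiBrunoTerm g f c x‖ ≤ D * ∏ i, C ^ c.partSize i := by
      refine (ContinuousMultilinearMap.le_of_opNorm_le hg _).trans ?_
      have hD : 0 ≤ D := (norm_nonneg _).trans hg
      gcongr with i
      exact hf i
    _ = D * C ^ n := by
      rw [Finset.prod_pow_eq_pow_sum, sum_partSize]

end FaaDiBruno

theorem composite_derivative_estimate_general {𝕜 E F : Type*} [NontriviallyNormedField 𝕜]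
    [NormedAddCommGroup E] [NormedSpace 𝕜 E] [NormedAddCommGroup F] [NormedSpace 𝕜 F]
    {p : ℕ} {v : E → F} {x : 𝕜 → E} {Cx Dv : ℝ} {s : 𝕜}
    (hv : ∀ n < p, Differentiable 𝕜 (iteratedFDeriv 𝕜 n v))
    (hx : ∀ n < p, Differentiable 𝕜 (iteratedDeriv n x))
    (hx_le : ∀ n, 1 ≤ n → n ≤ p → ‖iteratedDeriv n x s‖ ≤ Cx ^ n)
    (hv_le : ∀ n ≤ p, ‖iteratedFDeriv 𝕜 n v (x s)‖ ≤ Dv) :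
    ‖iteratedDeriv p (v ∘ x) s‖ ≤ Fintype.card (OrderedFinpartition p) * Dv * Cx ^ p := by
  have term_le (c : OrderedFinpartition p) : ‖faaDiBrunoTerm v x c s‖ ≤ Dv * Cx ^ p :=
    norm_faaDiBrunoTerm_le c (hv_le _ c.length_le) fun i ↦
      hx_le _ (c.partSize_pos i) (c.partSize_le i)
  calc
    ‖iteratedDeriv p (v ∘ x) s‖ = ‖∑ c : OrderedFinpartition p, faaDiBrunoTerm v x c s‖ := by
      rw [iteratedDeriv_vcomp_eq_sum_faaDiBrunoTerm hv hx]
    _ ≤ ∑ _c : OrderedFinpartition p, Dv * Cx ^ p := norm_sum_le_of_le _ fun c _ ↦ term_le c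
    _ = Fintype.card (OrderedFinpartition p) * Dv * Cx ^ p := by
      rw [Finset.sum_const, Finset.card_univ, nsmul_eq_mul, mul_assoc]

/-- Derivative estimate for composite functions (Lemma 5.4): for every `p ≥ 0` there is a
constant `C = C(p) > 0`, independent of `N`, `v`, `x` and `C_x`, such that if
`v : ℝ^N → ℝ` is `p` times continuously differentiable, `x : ℝ → ℝ^N` is `p` times
differentiable with `‖x^{(n)}‖_{L∞(ℝ,l∞)} ≤ C_x^n` for `n = 1,…,p`, and
`‖v‖_{D^p} ≤ Dv`, then `‖dᵖ(v∘x)/dtᵖ‖_{L∞(ℝ)} ≤ C · Dv · C_x^p`.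
(The `l∞` norm on `ℝ^N` is the sup norm, which is the norm of `Fin N → ℝ`, and
`‖iteratedFDeriv ℝ n v y‖` is exactly the smallest `M` with
`|Dⁿv(y)[w¹,…,wⁿ]| ≤ M ‖w¹‖_{l∞} ⋯ ‖wⁿ‖_{l∞}`.) -/
theorem composite_derivative_estimate (p : ℕ) :
    ∃ C : ℝ, 0 < C ∧
      ∀ (N : ℕ) (v : (Fin N → ℝ) → ℝ) (x : ℝ → Fin N → ℝ) (Cx Dv : ℝ),
        0 < Cx → 0 ≤ Dv →
        ContDiff ℝ p v →
        (∀ n < p, Differentiable ℝ (iteratedDeriv n x)) →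
        (∀ n, 1 ≤ n → n ≤ p → ∀ (s : ℝ) (i : Fin N), |iteratedDeriv n x s i| ≤ Cx ^ n) →
        (∀ n ≤ p, ∀ y : Fin N → ℝ, ‖iteratedFDeriv ℝ n v y‖ ≤ Dv) →
        ∀ s : ℝ, |iteratedDeriv p (fun r => v (x r)) s| ≤ C * Dv * Cx ^ p := by
  refine ⟨Fintype.card (OrderedFinpartition p), mod_cast Fintype.card_pos, ?_⟩
  intro N v x Cx Dv hCx _ hv hx hx_le hv_le s
  exact composite_derivative_estimate_general
    (fun n hn ↦ hv.differentiable_iteratedFDeriv (mod_cast hn)) hx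
    (fun n hn hnp ↦ (pi_norm_le_iff_of_nonneg (by positivity)).2 (hx_le n hn hnp s))
    (fun n hn ↦ hv_le n hn (x s))
end

section
/- Let B : [0,T] → ℝ^{N×N} be bounded and measurable, let 1 ≤ p ≤ ∞, and let W be the mcG(q) or mdG(q) solution of the linear problem ẇ(t) + B(t)·w(t) = 0 on (0,T], w(0) = w₀ (i.e., the method applied with f(w,t) = −B(t)·w). Then there is a constant C > 0, depending only on the maximal local degree max_{i,j} q_{ij}, such that if K_n·C·‖B‖_{L∞([T_{n−1},T_n], l_p)} ≤ 1 for n = 1,…,M, then ‖W‖_{L∞([T_{n−1},T_n], l_p)} ≤ C·‖w₀‖_{l_p}·exp( Σ_{m=1}^{n−1} K_m·C·‖B‖_{L∞([T_{m−1},T_m], l_p)} ) for n = 1,…,M, where ‖B(t)‖_{l_p} denotes the operator norm induced by the l_p norm on ℝ^N. -/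
open MeasureTheory

/-- The `l_p` norm on `ℝ^N` (`1 ≤ p ≤ ∞`), realized through the `PiLp` norm. -/
noncomputable def lpNorm (p : ENNReal) {N : ℕ} (x : Fin N → ℝ) : ℝ :=
  ‖(WithLp.equiv p (∀ _ : Fin N, ℝ)).symm x‖

/-- The local intervals `I_{ij} = (t_{i,j-1}, t_{ij}]` form a partition of `(0,T]`
for each component `i`. -/
def IsPartition (N : ℕ) (T : ℝ) (M : Fin N → ℕ) (t : Fin N → ℕ → ℝ) : Prop :=
  ∀ i : Fin N, 1 ≤ M i ∧ t i 0 = 0 ∧ t i (M i) = T ∧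
    ∀ j : ℕ, 1 ≤ j → j ≤ M i → t i (j - 1) < t i j

/-- `U` is an mcG(q) solution of `u̇ = f(u,·)`, `u 0 = u₀`. -/
def IsMcG (N : ℕ) (T : ℝ) (f : (Fin N → ℝ) → ℝ → Fin N → ℝ) (u₀ : Fin N → ℝ)
    (M : Fin N → ℕ) (t : Fin N → ℕ → ℝ) (q : Fin N → ℕ → ℕ)
    (U : ℝ → Fin N → ℝ) : Prop :=
  (∀ i : Fin N, ContinuousOn (fun s => U s i) (Set.Icc 0 T)) ∧ U 0 = u₀ ∧
  ∀ (i : Fin N) (j : ℕ), 1 ≤ j → j ≤ M i →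
    ∃ P : Polynomial ℝ, P.natDegree ≤ q i j ∧
      (∀ s ∈ Set.Ioc (t i (j - 1)) (t i j), U s i = P.eval s) ∧
      ∀ w : Polynomial ℝ, w.natDegree + 1 ≤ q i j →
        (∫ s in (t i (j - 1))..(t i j), (Polynomial.derivative P).eval s * w.eval s) =
          ∫ s in (t i (j - 1))..(t i j), f (U s) s i * w.eval s

/-- `U` is an mdG(q) solution of `u̇ = f(u,·)`, `u(0⁻) = u₀`. -/
def IsMdG (N : ℕ) (T : ℝ) (f : (Fin N → ℝ) → ℝ → Fin N → ℝ) (u₀ : Fin N → ℝ)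
    (M : Fin N → ℕ) (t : Fin N → ℕ → ℝ) (q : Fin N → ℕ → ℕ)
    (U : ℝ → Fin N → ℝ) : Prop :=
  U 0 = u₀ ∧
  ∀ (i : Fin N) (j : ℕ), 1 ≤ j → j ≤ M i →
    ∃ P : Polynomial ℝ, P.natDegree ≤ q i j ∧
      (∀ s ∈ Set.Ioc (t i (j - 1)) (t i j), U s i = P.eval s) ∧
      ∀ w : Polynomial ℝ, w.natDegree ≤ q i j →
        (P.eval (t i (j - 1)) - U (t i (j - 1)) i) * w.eval (t i (j - 1)) +
            (∫ s in (t i (j - 1))..(t i j), (Polynomial.derivative P).eval s * w.eval s) =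
          ∫ s in (t i (j - 1))..(t i j), f (U s) s i * w.eval s

/-!
On a local interval `[a, b]` the solution is a polynomial `P`, up to the value at `a`. Testing with
`(b - a) P'` (mcG) or `(x - a) P'` (mdG) bounds `∫ (x - a) P'²` by `(b - a) max |P'| ∫ |g|`, where
`g` is the right-hand side; the second test function removes the jump term because it vanishes at
`a`. An inverse estimate for polynomials of bounded degree turns this into
`(b - a) max |P'| ≤ A ∫ |g|`, so the solution deviates from its value at `a` by at most
`(1 + A) ∫ |g|`. Testing with `1` bounds the increment over the whole interval by `∫ |g|`, with
constant `1`. Hence the deviation bound survives concatenation, with the same constant, on a whole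
slab, and there it holds for all components at once, however different their partitions.
Minkowski's integral inequality, a linear growth bound for `f` and the smallness condition then
give `‖W s‖ ≤ (1 + K C β) ‖W a‖` on a slab, and the theorem follows by a discrete Gronwall argument.
-/

section WeightedInverseEstimate

open Polynomial

theorem exists_pos_mul_norm_sq_le {E : Type*} [NormedAddCommGroup E] [NormedSpace ℝ E]
    [ProperSpace E] {F : E → ℝ} (hF : Continuous F)
    (hsmul : ∀ (c : ℝ) (v : E), F (c • v) = c ^ 2 * F v) (hpos : ∀ v ≠ 0, 0 < F v) :
    ∃ m > 0, ∀ v, m * ‖v‖ ^ 2 ≤ F v := by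
  obtain ⟨m, hm, hmF⟩ := (isCompact_sphere (0 : E) 1).exists_forall_le' hF.continuousOn
    (fun v hv ↦ hpos v (ne_zero_of_mem_unit_sphere ⟨v, hv⟩))
  refine ⟨m, hm, fun v ↦ ?_⟩
  rcases eq_or_ne v 0 with rfl | hv
  · simpa using (hsmul 0 0).ge
  · have hunit : ‖v‖⁻¹ • v ∈ Metric.sphere (0 : E) 1 := by simp [norm_smul, hv]
    calc m * ‖v‖ ^ 2 ≤ F (‖v‖⁻¹ • v) * ‖v‖ ^ 2 := by gcongr; exact hmF _ hunit
      _ = F v := by rw [hsmul]; field [norm_ne_zero_iff.2 hv]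

theorem eval_ofFn {S : Type*} [CommSemiring S] [DecidableEq S] {n : ℕ} (v : Fin n → S) (x : S) :
    (ofFn n v).eval x = ∑ k, v k * x ^ (k : ℕ) := by
  simp [ofFn_eq_sum_monomial, eval_finsetSum]

theorem abs_eval_ofFn_le {n : ℕ} (v : Fin n → ℝ) {x : ℝ} (hx : |x| ≤ 1) :
    |(ofFn n v).eval x| ≤ n * ‖v‖ := by
  calc |(ofFn n v).eval x| ≤ ∑ k, |v k * x ^ (k : ℕ)| := by
        rw [eval_ofFn]; exact Finset.abs_sum_le_sum_abs _ _
    _ ≤ ∑ _k : Fin n, ‖v‖ := by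
        gcongr with k
        rw [abs_mul, abs_pow]
        exact (mul_le_of_le_one_right (abs_nonneg _) (pow_le_one₀ (abs_nonneg x) hx)).trans
          (norm_le_pi_norm v k)
    _ = n * ‖v‖ := by simp

theorem integral_sub_mul_sq_eval_pos {a b : ℝ} (hab : a < b) {R : ℝ[X]} (hR : R ≠ 0) :
    0 < ∫ x in a..b, (x - a) * R.eval x ^ 2 := by
  obtain ⟨c, hc, hRc⟩ : ∃ c ∈ Set.Ioo a b, R.eval c ≠ 0 := by
    by_contra! hzero
    exact hR (R.eq_zero_of_infinite_isRoot ((Set.Ioo_infinite hab).mono hzero))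
  refine intervalIntegral.integral_pos hab (by fun_prop)
    (fun x hx ↦ mul_nonneg (sub_nonneg.2 hx.1.le) (sq_nonneg _)) ⟨c, Set.Ioo_subset_Icc_self hc, ?_⟩
  exact mul_pos (sub_pos.2 hc.1) (by positivity)

theorem exists_sq_eval_le_integral (q : ℕ) :
    ∃ A : ℝ, 0 ≤ A ∧ ∀ R : ℝ[X], R.natDegree ≤ q → ∀ s ∈ Set.Icc (0 : ℝ) 1,
      R.eval s ^ 2 ≤ A * ∫ x in (0 : ℝ)..1, x * R.eval x ^ 2 := by
  let F : (Fin (q + 1) → ℝ) → ℝ := fun v ↦ ∫ x in (0 : ℝ)..1, x * (ofFn (q + 1) v).eval x ^ 2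
  have hFcont : Continuous F := by
    apply intervalIntegral.continuous_parametric_intervalIntegral_of_continuous'
    simp only [eval_ofFn, Function.uncurry_def]
    fun_prop
  have hFsmul (c : ℝ) (v : Fin (q + 1) → ℝ) : F (c • v) = c ^ 2 * F v := by
    simp only [F, map_smul, eval_smul, smul_eq_mul, ← intervalIntegral.integral_const_mul]
    congr! 2
    ring
  have hFpos (v : Fin (q + 1) → ℝ) (hv : v ≠ 0) : 0 < F v := by
    simpa [F] using integral_sub_mul_sq_eval_pos zero_lt_one
      ((map_ne_zero_iff _ (injective_ofFn (q + 1))).2 hv)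
  obtain ⟨m, hm, hmF⟩ := exists_pos_mul_norm_sq_le hFcont hFsmul hFpos
  refine ⟨(q + 1) ^ 2 / m, by positivity, fun R hR s hs ↦ ?_⟩
  set v := toFn (q + 1) R
  have hRv : ofFn (q + 1) v = R := ofFn_comp_toFn_eq_id_of_natDegree_lt (Nat.lt_succ_of_le hR)
  have hRs : |R.eval s| ≤ (q + 1) * ‖v‖ := by
    simpa [hRv] using abs_eval_ofFn_le v (abs_le.2 ⟨by linarith [hs.1], hs.2⟩)
  calc R.eval s ^ 2 ≤ ((q + 1) * ‖v‖) ^ 2 := by rw [← sq_abs]; gcongr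
    _ = (q + 1) ^ 2 / m * (m * ‖v‖ ^ 2) := by field
    _ ≤ (q + 1) ^ 2 / m * F v := by gcongr; exact hmF v
    _ = (q + 1) ^ 2 / m * ∫ x in (0 : ℝ)..1, x * R.eval x ^ 2 := by simp only [F, hRv]

theorem integral_sub_mul_sq_eval_comp (R : ℝ[X]) (a b : ℝ) :
    ∫ x in a..b, (x - a) * R.eval x ^ 2 =
      (b - a) ^ 2 * ∫ x in (0 : ℝ)..1, x * (R.comp (C (b - a) * X + C a)).eval x ^ 2 := by
  have hsubst := intervalIntegral.smul_integral_comp_mul_add (a := 0) (b := 1)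
    (fun x ↦ (x - a) * R.eval x ^ 2) (b - a) a
  simp only [mul_zero, zero_add, mul_one, sub_add_cancel, add_sub_cancel_right] at hsubst
  rw [← hsubst, smul_eq_mul, pow_two, mul_assoc, ← intervalIntegral.integral_const_mul]
  simp [mul_assoc]

/-- `A` is a constant for which the square of the maximum over an interval `[a, b]` of a polynomial
of degree at most `q` is controlled by its mean square with weight `x - a`, uniformly in `[a, b]`.
The vanishing of the weight at the left endpoint is what the mdG method requires. -/
structure InverseEstimate (q : ℕ) (A : ℝ) : Prop where
  nonneg : 0 ≤ A
  sq_eval_mul_le : ∀ R : ℝ[X], R.natDegree ≤ q → ∀ a b : ℝ, a < b → ∀ s ∈ Set.Icc a b,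
    (R.eval s * (b - a)) ^ 2 ≤ A * ∫ x in a..b, (x - a) * R.eval x ^ 2

theorem exists_inverseEstimate (q : ℕ) : ∃ A, InverseEstimate q A := by
  obtain ⟨A, hA, hunit⟩ := exists_sq_eval_le_integral q
  refine ⟨A, hA, fun R hR a b hab s hs ↦ ?_⟩
  have hba : 0 < b - a := sub_pos.2 hab
  set Q := R.comp (C (b - a) * X + C a) with hQ
  have hQdeg : Q.natDegree ≤ q := natDegree_comp_le.trans
    ((Nat.mul_le_mul_left _ natDegree_linear_le).trans (by simpa using hR))
  have hQs : Q.eval ((s - a) / (b - a)) = R.eval s := by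
    simp [Q, mul_div_cancel₀ (s - a) hba.ne']
  have hmem : (s - a) / (b - a) ∈ Set.Icc (0 : ℝ) 1 :=
    ⟨div_nonneg (sub_nonneg.2 hs.1) hba.le, (div_le_one hba).2 (by linarith [hs.2])⟩
  calc (R.eval s * (b - a)) ^ 2 = Q.eval ((s - a) / (b - a)) ^ 2 * (b - a) ^ 2 := by
        rw [hQs, mul_pow]
    _ ≤ (A * ∫ x in (0 : ℝ)..1, x * Q.eval x ^ 2) * (b - a) ^ 2 := by
        gcongr; exact hunit Q hQdeg _ hmem
    _ = A * ∫ x in a..b, (x - a) * R.eval x ^ 2 := by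
        rw [integral_sub_mul_sq_eval_comp, ← hQ]; ring

theorem InverseEstimate.mono {k q : ℕ} {A : ℝ} (hkq : k ≤ q) (hA : InverseEstimate q A) :
    InverseEstimate k A :=
  ⟨hA.nonneg, fun R hR ↦ hA.sq_eval_mul_le R (hR.trans hkq)⟩

theorem abs_integral_mul_le {f w : ℝ → ℝ} {a b D : ℝ} (hab : a ≤ b)
    (hf : IntervalIntegrable f volume a b) (hw : ∀ x ∈ Set.Icc a b, |w x| ≤ D) :
    |∫ x in a..b, f x * w x| ≤ D * ∫ x in a..b, |f x| := by
  rw [← intervalIntegral.integral_const_mul, ← Real.norm_eq_abs]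
  refine intervalIntegral.norm_integral_le_of_norm_le hab (ae_of_all _ fun x hx ↦ ?_)
    (hf.abs.const_mul D)
  rw [Real.norm_eq_abs, abs_mul, mul_comm]
  gcongr
  exact hw x (Set.Ioc_subset_Icc_self hx)

theorem InverseEstimate.abs_eval_derivative_mul_le {q : ℕ} {A : ℝ} (hA : InverseEstimate q A)
    {P : ℝ[X]} (hP : P.natDegree ≤ q) {g w : ℝ → ℝ} {a b : ℝ} (hab : a < b)
    (hg : IntervalIntegrable g volume a b)
    (hw : ∀ x ∈ Set.Icc a b, |w x| ≤ (b - a) * |P.derivative.eval x|)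
    (henergy : ∫ x in a..b, (x - a) * P.derivative.eval x ^ 2 ≤ ∫ x in a..b, g x * w x) :
    ∀ x ∈ Set.Icc a b, |P.derivative.eval x| * (b - a) ≤ A * ∫ x in a..b, |g x| := by
  have hba : 0 < b - a := sub_pos.2 hab
  set F := ∫ x in a..b, |g x|
  have hF : 0 ≤ F := intervalIntegral.integral_nonneg hab.le fun _ _ ↦ abs_nonneg _
  obtain ⟨x₀, hx₀, hmax⟩ := isCompact_Icc.exists_isMaxOn (Set.nonempty_Icc.2 hab.le)
    (f := fun x ↦ |P.derivative.eval x|) (by fun_prop)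
  obtain ⟨D, hD⟩ : ∃ D, D = |P.derivative.eval x₀| := ⟨_, rfl⟩
  have hle (x) (hx : x ∈ Set.Icc a b) : |P.derivative.eval x| ≤ D := hD ▸ hmax hx
  have hgw : ∫ x in a..b, g x * w x ≤ (b - a) * D * F :=
    (le_abs_self _).trans <| abs_integral_mul_le hab.le hg fun x hx ↦
      (hw x hx).trans (by gcongr; exact hle x hx)
  have hsq : (D * (b - a)) * (D * (b - a)) ≤ (A * F) * (D * (b - a)) := by
    calc (D * (b - a)) * (D * (b - a)) = (P.derivative.eval x₀ * (b - a)) ^ 2 := by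
          rw [mul_pow, ← sq_abs (P.derivative.eval x₀), hD]; ring
      _ ≤ A * ∫ x in a..b, (x - a) * P.derivative.eval x ^ 2 :=
          hA.sq_eval_mul_le _ (P.natDegree_derivative_le.trans (by omega)) a b hab x₀ hx₀
      _ ≤ A * ((b - a) * D * F) := by
          gcongr
          · exact hA.nonneg
          · exact henergy.trans hgw
      _ = (A * F) * (D * (b - a)) := by ring
  have hDF : D * (b - a) ≤ A * F := by
    by_contra! hlt
    have hpos : 0 < D * (b - a) := (mul_nonneg hA.nonneg hF).trans_lt hlt
    exact hlt.not_ge (le_of_mul_le_mul_right hsq hpos)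
  exact fun x hx ↦ (mul_le_mul_of_nonneg_right (hle x hx) hba.le).trans hDF

theorem InverseEstimate.abs_eval_sub_le {q : ℕ} {A : ℝ} (hA : InverseEstimate q A) {P : ℝ[X]}
    (hP : P.natDegree ≤ q) {g w : ℝ → ℝ} {a b : ℝ} (hab : a < b)
    (hg : IntervalIntegrable g volume a b)
    (hw : ∀ x ∈ Set.Icc a b, |w x| ≤ (b - a) * |P.derivative.eval x|)
    (henergy : ∫ x in a..b, (x - a) * P.derivative.eval x ^ 2 ≤ ∫ x in a..b, g x * w x) :
    ∀ s ∈ Set.Icc a b, ∀ r ∈ Set.Icc a b, |P.eval s - P.eval r| ≤ A * ∫ x in a..b, |g x| := by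
  have hba : 0 < b - a := sub_pos.2 hab
  set F := ∫ x in a..b, |g x|
  have hderiv : ∀ x ∈ Set.Icc a b, |P.derivative.eval x| ≤ A * F / (b - a) := fun x hx ↦
    (le_div_iff₀ hba).2 (hA.abs_eval_derivative_mul_le hP hab hg hw henergy x hx)
  have hslope : 0 ≤ A * F / (b - a) := (abs_nonneg _).trans (hderiv a (Set.left_mem_Icc.2 hab.le))
  intro s hs r hr
  calc |P.eval s - P.eval r| ≤ A * F / (b - a) * |s - r| :=
        (convex_Icc a b).norm_image_sub_le_of_norm_hasDerivWithin_le (f := fun x ↦ P.eval x)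
          (fun x _ ↦ (P.hasDerivAt x).hasDerivWithinAt) hderiv hr hs
    _ ≤ A * F / (b - a) * (b - a) := by gcongr; exact Real.dist_le_of_mem_Icc hs hr
    _ = A * F := div_mul_cancel₀ _ hba.ne'

end WeightedInverseEstimate

section StepBound

/-- On `[a, b]`, the function `u` moves away from its initial value `u a` by at most `C ∫ |g|`, and
its total increment over `[a, b]` is even at most `∫ |g|`. A Galerkin solution of `u̇ = g` has this
property on each local interval; the sharp constant at the right endpoint is what allows steps to
be concatenated without deteriorating `C`. -/
structure StepBound (C : ℝ) (g u : ℝ → ℝ) (a b : ℝ) : Prop where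
  abs_increment_le : |u b - u a| ≤ ∫ x in a..b, |g x|
  abs_deviation_le : ∀ s ∈ Set.Icc a b, |u s - u a| ≤ C * ∫ x in a..b, |g x|

namespace StepBound

variable {C : ℝ} {g u : ℝ → ℝ} {a b c : ℝ}

theorem refl : StepBound C g u a a :=
  ⟨by simp, fun s hs ↦ by simp [le_antisymm hs.2 hs.1]⟩

theorem of_forall_eq (hC : 0 ≤ C) (hab : a ≤ b) (h : ∀ s ∈ Set.Icc a b, u s = u a) :
    StepBound C g u a b := by
  have hg : 0 ≤ ∫ x in a..b, |g x| := intervalIntegral.integral_nonneg hab fun _ _ ↦ abs_nonneg _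
  refine ⟨by simpa [h b (Set.right_mem_Icc.2 hab)], fun s hs ↦ ?_⟩
  rw [h s hs, sub_self, abs_zero]
  exact mul_nonneg hC hg

theorem trans (hC : 1 ≤ C) (hb : b ∈ Set.Icc a c) (hg : IntervalIntegrable g volume a c)
    (h₁ : StepBound C g u a b) (h₂ : StepBound C g u b c) : StepBound C g u a c := by
  have hb' : b ∈ Set.uIcc a c := Set.Icc_subset_uIcc hb
  have hadd : (∫ x in a..b, |g x|) + ∫ x in b..c, |g x| = ∫ x in a..c, |g x| :=
    intervalIntegral.integral_add_adjacent_intervals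
      (hg.abs.mono_set (Set.uIcc_subset_uIcc_left hb'))
      (hg.abs.mono_set (Set.uIcc_subset_uIcc_right hb'))
  have hab : 0 ≤ ∫ x in a..b, |g x| :=
    intervalIntegral.integral_nonneg hb.1 fun _ _ ↦ abs_nonneg _
  have hbc : 0 ≤ ∫ x in b..c, |g x| :=
    intervalIntegral.integral_nonneg hb.2 fun _ _ ↦ abs_nonneg _
  refine ⟨?_, fun s hs ↦ ?_⟩
  · calc |u c - u a| ≤ |u c - u b| + |u b - u a| := abs_sub_le _ _ _
      _ ≤ ∫ x in a..c, |g x| := by linarith [h₁.abs_increment_le, h₂.abs_increment_le]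
  · rw [← hadd]
    rcases le_total s b with hsb | hbs
    · exact (h₁.abs_deviation_le s ⟨hs.1, hsb⟩).trans (by gcongr; linarith)
    · calc |u s - u a| ≤ |u s - u b| + |u b - u a| := abs_sub_le _ _ _
        _ ≤ C * (∫ x in b..c, |g x|) + 1 * ∫ x in a..b, |g x| := by
            linarith [h₂.abs_deviation_le s ⟨hbs, hs.2⟩, h₁.abs_increment_le]
        _ ≤ C * (∫ x in b..c, |g x|) + C * ∫ x in a..b, |g x| := by gcongr
        _ = C * ((∫ x in a..b, |g x|) + ∫ x in b..c, |g x|) := by ring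

theorem trans_iterate {t : ℕ → ℝ} {k l : ℕ} (hkl : k ≤ l) (ht : MonotoneOn t (Set.Icc k l))
    (hC : 1 ≤ C) (hg : IntervalIntegrable g volume (t k) (t l))
    (h : ∀ j ∈ Set.Ico k l, StepBound C g u (t j) (t (j + 1))) :
    StepBound C g u (t k) (t l) := by
  induction l, hkl using Nat.le_induction with
  | base => exact refl
  | succ l hkl ih =>
    have hl : t l ∈ Set.Icc (t k) (t (l + 1)) :=
      ⟨ht ⟨le_rfl, by omega⟩ ⟨hkl, by omega⟩ hkl,
        ht ⟨hkl, by omega⟩ ⟨by omega, le_rfl⟩ (Nat.le_succ l)⟩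
    refine (ih (ht.mono (Set.Icc_subset_Icc_right (Nat.le_succ l))) ?_ fun j hj ↦ ?_).trans
      hC hl hg (h l ⟨hkl, Nat.lt_succ_self l⟩)
    · exact hg.mono_set (Set.uIcc_subset_uIcc_left (Set.Icc_subset_uIcc hl))
    · exact h j ⟨hj.1, hj.2.trans (Nat.lt_succ_self l)⟩

end StepBound

end StepBound

section LocalProblem

open Polynomial

variable {q : ℕ} {A : ℝ} {P : ℝ[X]} {g u : ℝ → ℝ} {a b : ℝ}

theorem InverseEstimate.stepBound (hA : InverseEstimate q A) (hP : P.natDegree ≤ q) (hab : a < b)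
    (hg : IntervalIntegrable g volume a b) (hu : ∀ s ∈ Set.Ioc a b, u s = P.eval s)
    (hincr : P.eval b - u a = ∫ x in a..b, g x) {w : ℝ → ℝ}
    (hw : ∀ x ∈ Set.Icc a b, |w x| ≤ (b - a) * |P.derivative.eval x|)
    (henergy : ∫ x in a..b, (x - a) * P.derivative.eval x ^ 2 ≤ ∫ x in a..b, g x * w x) :
    StepBound (1 + A) g u a b := by
  have hPb : |P.eval b - u a| ≤ ∫ x in a..b, |g x| :=
    hincr ▸ intervalIntegral.abs_integral_le_integral_abs hab.le
  refine ⟨by rwa [hu b (Set.right_mem_Ioc.2 hab)], fun s hs ↦ ?_⟩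
  rcases hs.1.eq_or_lt with rfl | has
  · rw [sub_self, abs_zero]
    exact mul_nonneg (add_nonneg zero_le_one hA.nonneg) ((abs_nonneg _).trans hPb)
  · rw [hu s ⟨has, hs.2⟩]
    calc |P.eval s - u a| ≤ |P.eval s - P.eval b| + |P.eval b - u a| := abs_sub_le _ _ _
      _ ≤ A * (∫ x in a..b, |g x|) + ∫ x in a..b, |g x| := by
          gcongr
          exact hA.abs_eval_sub_le hP hab hg hw henergy s hs b (Set.right_mem_Icc.2 hab.le)
      _ = (1 + A) * ∫ x in a..b, |g x| := by ring

theorem integral_eval_derivative (P : ℝ[X]) (a b : ℝ) :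
    ∫ x in a..b, P.derivative.eval x = P.eval b - P.eval a :=
  intervalIntegral.integral_eq_sub_of_hasDerivAt (fun x _ ↦ P.hasDerivAt x)
    (Continuous.intervalIntegrable (by fun_prop) _ _)

theorem InverseEstimate.stepBound_mcG (hA : InverseEstimate q A) (hP : P.natDegree ≤ q)
    (hab : a < b) (hg : IntervalIntegrable g volume a b)
    (hu : ∀ s ∈ Set.Ioc a b, u s = P.eval s) (hua : u a = P.eval a)
    (hgal : ∀ w : ℝ[X], w.natDegree + 1 ≤ q →
      ∫ x in a..b, P.derivative.eval x * w.eval x = ∫ x in a..b, g x * w.eval x) :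
    StepBound (1 + A) g u a b := by
  rcases q.eq_zero_or_pos with rfl | hq
  · obtain ⟨c, rfl⟩ := natDegree_eq_zero.1 (Nat.le_zero.1 hP)
    refine StepBound.of_forall_eq (add_nonneg zero_le_one hA.nonneg) hab.le fun s hs ↦ ?_
    rcases hs.1.eq_or_lt with rfl | has
    · rfl
    · simp [hua, hu s ⟨has, hs.2⟩]
  have hba : 0 < b - a := sub_pos.2 hab
  have hdeg : (C (b - a) * P.derivative).natDegree + 1 ≤ q := by
    have := P.natDegree_derivative_le
    have := natDegree_C_mul_le (b - a) P.derivative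
    omega
  refine hA.stepBound hP hab hg hu (w := fun x ↦ (C (b - a) * P.derivative).eval x) ?_ ?_ ?_
  · simpa [hua, integral_eval_derivative] using hgal 1 (by simpa using Nat.succ_le_of_lt hq)
  · intro x _
    simp [abs_mul, abs_of_pos hba]
  · rw [← hgal _ hdeg]
    refine intervalIntegral.integral_mono_on hab.le
      (Continuous.intervalIntegrable (by fun_prop) _ _)
      (Continuous.intervalIntegrable (by fun_prop) _ _) fun x hx ↦ ?_
    calc (x - a) * P.derivative.eval x ^ 2 ≤ (b - a) * P.derivative.eval x ^ 2 := by
          gcongr; exact hx.2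
      _ = P.derivative.eval x * (C (b - a) * P.derivative).eval x := by
          simp only [eval_mul, eval_C]; ring

theorem InverseEstimate.stepBound_mdG (hA : InverseEstimate q A) (hP : P.natDegree ≤ q)
    (hab : a < b) (hg : IntervalIntegrable g volume a b)
    (hu : ∀ s ∈ Set.Ioc a b, u s = P.eval s)
    (hgal : ∀ w : ℝ[X], w.natDegree ≤ q →
      (P.eval a - u a) * w.eval a + ∫ x in a..b, P.derivative.eval x * w.eval x =
        ∫ x in a..b, g x * w.eval x) :
    StepBound (1 + A) g u a b := by
  have hdeg : ((X - C a) * P.derivative).natDegree ≤ q := by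
    rcases P.natDegree.eq_zero_or_pos with hzero | hpos
    · simp [derivative_of_natDegree_zero hzero]
    · have := natDegree_mul_le (p := X - C a) (q := P.derivative)
      have := natDegree_X_sub_C a
      have := P.natDegree_derivative_le
      omega
  refine hA.stepBound hP hab hg hu (w := fun x ↦ ((X - C a) * P.derivative).eval x) ?_ ?_ ?_
  · have hone := hgal 1 (by simp)
    simp only [eval_one, mul_one, integral_eval_derivative] at hone
    linarith
  · intro x hx
    simp only [eval_mul, eval_sub, eval_X, eval_C, abs_mul, abs_of_nonneg (sub_nonneg.2 hx.1)]
    gcongr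
    exact hx.2
  · rw [← hgal _ hdeg]
    simp [pow_two, mul_left_comm]

end LocalProblem

section VectorEstimate

theorem piLp_norm_le_piLp_norm {p : ENNReal} [Fact (1 ≤ p)] {ι : Type*} [Fintype ι] {β : ι → Type*}
    [∀ i, SeminormedAddCommGroup (β i)] {x y : PiLp p β} (h : ∀ i, ‖x i‖ ≤ ‖y i‖) :
    ‖x‖ ≤ ‖y‖ := by
  rcases eq_or_ne p ⊤ with rfl | hp
  · simp only [PiLp.norm_eq_ciSup]
    exact ciSup_mono (Set.finite_range _).bddAbove h
  · have hp0 : 0 < p.toReal := ENNReal.toReal_pos (zero_lt_one.trans_le Fact.out).ne' hp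
    simp only [PiLp.norm_eq_sum hp0]
    gcongr with i
    exact h i

variable {p : ENNReal} [Fact (1 ≤ p)] {ι : Type*} [Fintype ι]

theorem norm_le_mul_integral_norm {Ω : Type*} [MeasurableSpace Ω] {μ : Measure Ω} {C : ℝ}
    (hC : 0 ≤ C) {G : Ω → PiLp p fun _ : ι ↦ ℝ} (hG : Integrable G μ)
    {x : PiLp p fun _ : ι ↦ ℝ} (h : ∀ i, |x i| ≤ C * ∫ ω, |G ω i| ∂μ) :
    ‖x‖ ≤ C * ∫ ω, ‖G ω‖ ∂μ := by
  let absG : Ω → PiLp p fun _ : ι ↦ ℝ := fun ω ↦ WithLp.toLp p fun i ↦ |G ω i|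
  have habsG (i : ι) : Integrable (absG · i) μ := (hG.eval_piLp i).abs
  calc ‖x‖ ≤ ‖C • ∫ ω, absG ω ∂μ‖ := piLp_norm_le_piLp_norm fun i ↦ by
        rw [PiLp.smul_apply, eval_integral_piLp habsG, smul_eq_mul, Real.norm_eq_abs]
        exact (h i).trans (le_abs_self _)
    _ = C * ‖∫ ω, absG ω ∂μ‖ := by rw [norm_smul, Real.norm_of_nonneg hC]
    _ ≤ C * ∫ ω, ‖absG ω‖ ∂μ := by gcongr; exact norm_integral_le_integral_norm _
    _ ≤ C * ∫ ω, ‖G ω‖ ∂μ := by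
        refine mul_le_mul_of_nonneg_left (integral_mono (Integrable.of_eval_piLp habsG).norm
          hG.norm fun ω ↦ piLp_norm_le_piLp_norm fun i ↦ ?_) hC
        simp [absG]

theorem le_one_add_mul_of_le_add_mul_integral {v : ℝ → ℝ} {a b c L : ℝ} (hab : a ≤ b) (hL : 0 ≤ L)
    (hsmall : (b - a) * (2 * L) ≤ 1) (hv : IntervalIntegrable v volume a b)
    (hv0 : ∀ s ∈ Set.Icc a b, 0 ≤ v s)
    (h : ∀ s ∈ Set.Icc a b, v s ≤ c + L * ∫ x in a..b, v x) :
    ∀ s ∈ Set.Icc a b, v s ≤ (1 + (b - a) * (2 * L)) * c := by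
  set I := ∫ x in a..b, v x
  have hI0 : 0 ≤ I := intervalIntegral.integral_nonneg hab hv0
  have hI : I ≤ (b - a) * (c + L * I) := by
    simpa only [intervalIntegral.integral_const, smul_eq_mul] using
      intervalIntegral.integral_mono_on hab hv intervalIntegrable_const h
  have hI' : I ≤ 2 * (b - a) * c := by linarith [mul_le_mul_of_nonneg_right hsmall hI0]
  intro s hs
  linarith [h s hs, mul_le_mul_of_nonneg_left hI' hL]

theorem norm_le_of_stepBound {V G : ℝ → PiLp p fun _ : ι ↦ ℝ} {a b C β : ℝ} (hab : a ≤ b)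
    (hC : 0 ≤ C) (hV : IntervalIntegrable V volume a b) (hG : IntervalIntegrable G volume a b)
    (hGV : ∀ s ∈ Set.Icc a b, ‖G s‖ ≤ β * ‖V s‖)
    (hstep : ∀ i, StepBound C (G · i) (V · i) a b) (hsmall : (b - a) * (2 * C) * β ≤ 1) :
    ∀ s ∈ Set.Icc a b, ‖V s‖ ≤ (1 + (b - a) * (2 * C) * β) * ‖V a‖ := by
  rcases lt_or_ge β 0 with hβ | hβ
  · have hzero (s) (hs : s ∈ Set.Icc a b) : ‖V s‖ = 0 := by
      nlinarith [norm_nonneg (G s), norm_nonneg (V s), hGV s hs]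
    intro s hs
    simp [hzero s hs, hzero a (Set.left_mem_Icc.2 hab)]
  have hint : ∫ x in a..b, ‖G x‖ ≤ β * ∫ x in a..b, ‖V x‖ := by
    rw [← intervalIntegral.integral_const_mul]
    exact intervalIntegral.integral_mono_on hab hG.norm (hV.norm.const_mul β) hGV
  have hdev (s) (hs : s ∈ Set.Icc a b) : ‖V s - V a‖ ≤ C * ∫ x in a..b, ‖G x‖ := by
    rw [intervalIntegral.integral_of_le hab]
    refine norm_le_mul_integral_norm hC hG.1 fun i ↦ ?_
    rw [← intervalIntegral.integral_of_le hab]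
    exact (hstep i).abs_deviation_le s hs
  have hassoc : (b - a) * (2 * C) * β = (b - a) * (2 * (C * β)) := by ring
  rw [hassoc] at hsmall ⊢
  refine le_one_add_mul_of_le_add_mul_integral hab (mul_nonneg hC hβ) hsmall hV.norm
    (fun _ _ ↦ norm_nonneg _) fun s hs ↦ ?_
  calc ‖V s‖ ≤ ‖V a‖ + ‖V s - V a‖ := norm_le_norm_add_norm_sub' _ _
    _ ≤ ‖V a‖ + C * (β * ∫ x in a..b, ‖V x‖) := by
        gcongr
        exact (hdev s hs).trans (by gcongr)
    _ = ‖V a‖ + C * β * ∫ x in a..b, ‖V x‖ := by ring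

end VectorEstimate

section Grids

theorem le_mul_exp_sum_of_le_one_add_mul {v κ : ℕ → ℝ} {L : ℕ} (hv : ∀ n ≤ L, 0 ≤ v n)
    (h : ∀ n < L, v (n + 1) ≤ (1 + κ (n + 1)) * v n) :
    ∀ n ≤ L, v n ≤ v 0 * Real.exp (∑ m ∈ Finset.Icc 1 n, κ m) := by
  intro n
  induction n with
  | zero => simp
  | succ n ih =>
    intro hn
    calc v (n + 1) ≤ (1 + κ (n + 1)) * v n := h n hn
      _ ≤ Real.exp (κ (n + 1)) * (v 0 * Real.exp (∑ m ∈ Finset.Icc 1 n, κ m)) := by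
          gcongr
          · exact hv n (by omega)
          · rw [add_comm]; exact Real.add_one_le_exp _
          · exact ih (by omega)
      _ = v 0 * Real.exp (∑ m ∈ Finset.Icc 1 (n + 1), κ m) := by
          rw [Finset.sum_Icc_succ_top (by omega), Real.exp_add]; ring

theorem strictMonoOn_Iic_of_sub_one_lt {α : Type*} [Preorder α] {t : ℕ → α} {M : ℕ}
    (h : ∀ j, 1 ≤ j → j ≤ M → t (j - 1) < t j) : StrictMonoOn t (Set.Iic M) :=
  strictMonoOn_Iic_of_lt_succ fun j hj ↦ h (j + 1) (by omega) hj

theorem exists_node_eq {α : Type*} [LinearOrder α] {t τ : ℕ → α} {M L n : ℕ}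
    (hτ : MonotoneOn τ (Set.Iic L)) (hn : n ≤ L) (h0 : t 0 ≤ τ n) (hM : τ n ≤ t M)
    (hsync : ∀ j, 1 ≤ j → j ≤ M → ∃ m, 1 ≤ m ∧ m ≤ L ∧ τ (m - 1) ≤ t (j - 1) ∧ t j ≤ τ m) :
    ∃ k ≤ M, t k = τ n := by
  classical
  set k := Nat.findGreatest (fun j ↦ t j ≤ τ n) M
  have hkM : k ≤ M := Nat.findGreatest_le M
  have hk : t k ≤ τ n := Nat.findGreatest_spec (P := fun j ↦ t j ≤ τ n) (Nat.zero_le M) h0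
  refine ⟨k, hkM, hk.eq_of_not_lt fun hlt ↦ ?_⟩
  have hkM' : k < M := hkM.lt_of_ne fun heq ↦ (heq ▸ hlt).not_ge hM
  have hk' : τ n < t (k + 1) :=
    not_le.1 (Nat.findGreatest_is_greatest (Nat.lt_succ_self k) hkM')
  obtain ⟨m, _, hmL, hleft, hright⟩ := hsync (k + 1) (by omega) hkM'
  have hnm : n < m := hτ.reflect_lt hn hmL (hk'.trans_le hright)
  have hmn : m - 1 < n :=
    hτ.reflect_lt (show m - 1 ≤ L by omega) hn (hleft.trans_lt hlt)
  omega

theorem intervalIntegrable_of_eq_polynomial {u : ℝ → ℝ} {t : ℕ → ℝ} {M : ℕ}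
    (ht : MonotoneOn t (Set.Iic M))
    (hu : ∀ j < M, ∃ P : Polynomial ℝ, ∀ s ∈ Set.Ioc (t j) (t (j + 1)), u s = P.eval s) :
    IntervalIntegrable u volume (t 0) (t M) := by
  refine IntervalIntegrable.trans_iterate fun j hj ↦ ?_
  obtain ⟨P, hP⟩ := hu j hj
  refine (P.continuous.intervalIntegrable (t j) (t (j + 1))).congr fun s hs ↦ (hP s ?_).symm
  rwa [Set.uIoc_of_le (ht hj.le hj (Nat.le_succ j))] at hs

end Grids

section Galerkin

theorem eq_of_continuousWithinAt_of_eqOn_Ioc {α β : Type*} [TopologicalSpace α] [LinearOrder α]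
    [OrderTopology α] [DenselyOrdered α] [TopologicalSpace β] [T2Space β] {u v : α → β} {a b : α}
    (hab : a < b) (hu : ContinuousWithinAt u (Set.Ioc a b) a)
    (hv : ContinuousWithinAt v (Set.Ioc a b) a)
    (huv : Set.EqOn u v (Set.Ioc a b)) : u a = v a := by
  have : (nhdsWithin a (Set.Ioc a b)).NeBot := by
    rw [nhdsWithin_Ioc_eq_nhdsGT hab]; exact nhdsGT_neBot_of_exists_gt ⟨b, hab⟩
  exact tendsto_nhds_unique_of_eventuallyEq hu hv (huv.eventuallyEq_of_mem self_mem_nhdsWithin)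

/-- `U` is an mcG(q) or an mdG(q) solution of `u̇ = f(u,·)`, `u 0 = u₀`. -/
def IsGalerkin (N : ℕ) (T : ℝ) (f : (Fin N → ℝ) → ℝ → Fin N → ℝ) (u₀ : Fin N → ℝ)
    (M : Fin N → ℕ) (t : Fin N → ℕ → ℝ) (q : Fin N → ℕ → ℕ) (U : ℝ → Fin N → ℝ) : Prop :=
  IsMcG N T f u₀ M t q U ∨ IsMdG N T f u₀ M t q U

variable {N : ℕ} {T A : ℝ} {f : (Fin N → ℝ) → ℝ → Fin N → ℝ} {u₀ : Fin N → ℝ} {M : Fin N → ℕ}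
  {t : Fin N → ℕ → ℝ} {q : Fin N → ℕ → ℕ} {U : ℝ → Fin N → ℝ} {i : Fin N} {j k l qmax : ℕ}

theorem IsPartition.strictMonoOn (ht : IsPartition N T M t) (i : Fin N) :
    StrictMonoOn (t i) (Set.Iic (M i)) :=
  strictMonoOn_Iic_of_sub_one_lt (ht i).2.2.2

theorem IsPartition.mem_Icc (ht : IsPartition N T M t) (hj : j ≤ M i) :
    t i j ∈ Set.Icc 0 T := by
  have hmono := (ht.strictMonoOn i).monotoneOn
  obtain ⟨-, h0, hT, -⟩ := ht i
  exact ⟨h0 ▸ hmono (Nat.zero_le _) hj (Nat.zero_le j), hT ▸ hmono hj Set.self_mem_Iic hj⟩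

theorem IsMcG.stepBound (hU : IsMcG N T f u₀ M t q U) (ht : IsPartition N T M t) (hj : j < M i)
    (hA : InverseEstimate (q i (j + 1)) A)
    (hg : IntervalIntegrable (fun s ↦ f (U s) s i) volume (t i j) (t i (j + 1))) :
    StepBound (1 + A) (fun s ↦ f (U s) s i) (U · i) (t i j) (t i (j + 1)) := by
  have hlt : t i j < t i (j + 1) := ht.strictMonoOn i hj.le hj (Nat.lt_succ_self j)
  have hleft := ht.mem_Icc hj.le
  have hsub : Set.Ioc (t i j) (t i (j + 1)) ⊆ Set.Icc 0 T := fun s hs ↦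
    ⟨hleft.1.trans hs.1.le, hs.2.trans (ht.mem_Icc hj).2⟩
  obtain ⟨P, hP, hUP, hgal⟩ := hU.2.2 i (j + 1) (by omega) hj
  exact hA.stepBound_mcG hP hlt hg hUP (eq_of_continuousWithinAt_of_eqOn_Ioc hlt
    ((hU.1 i _ hleft).mono hsub) P.continuous.continuousWithinAt hUP) hgal

theorem IsMdG.stepBound (hU : IsMdG N T f u₀ M t q U) (ht : IsPartition N T M t) (hj : j < M i)
    (hA : InverseEstimate (q i (j + 1)) A)
    (hg : IntervalIntegrable (fun s ↦ f (U s) s i) volume (t i j) (t i (j + 1))) :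
    StepBound (1 + A) (fun s ↦ f (U s) s i) (U · i) (t i j) (t i (j + 1)) := by
  obtain ⟨P, hP, hUP, hgal⟩ := hU.2 i (j + 1) (by omega) hj
  exact hA.stepBound_mdG hP (ht.strictMonoOn i hj.le hj (Nat.lt_succ_self j)) hg hUP hgal

namespace IsGalerkin

theorem apply_zero (hU : IsGalerkin N T f u₀ M t q U) : U 0 = u₀ :=
  hU.elim (fun h ↦ h.2.1) fun h ↦ h.1

theorem exists_polynomial (hU : IsGalerkin N T f u₀ M t q U) (hj : j < M i) :
    ∃ P : Polynomial ℝ, ∀ s ∈ Set.Ioc (t i j) (t i (j + 1)), U s i = P.eval s := by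
  rcases hU with hU | hU
  · exact (hU.2.2 i (j + 1) (by omega) hj).imp fun _ hP ↦ hP.2.1
  · exact (hU.2 i (j + 1) (by omega) hj).imp fun _ hP ↦ hP.2.1

theorem intervalIntegrable (hU : IsGalerkin N T f u₀ M t q U) (ht : IsPartition N T M t)
    (i : Fin N) : IntervalIntegrable (U · i) volume 0 T := by
  have hint := intervalIntegrable_of_eq_polynomial (ht.strictMonoOn i).monotoneOn
    fun _ hj ↦ hU.exists_polynomial hj
  rwa [(ht i).2.1, (ht i).2.2.1] at hint

theorem stepBound (hU : IsGalerkin N T f u₀ M t q U) (ht : IsPartition N T M t)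
    (hA : InverseEstimate qmax A) (hq : ∀ j, 1 ≤ j → j ≤ M i → q i j ≤ qmax)
    (hl : l ≤ M i) (hkl : k ≤ l)
    (hg : IntervalIntegrable (fun s ↦ f (U s) s i) volume (t i k) (t i l)) :
    StepBound (1 + A) (fun s ↦ f (U s) s i) (U · i) (t i k) (t i l) := by
  have hmono : MonotoneOn (t i) (Set.Icc k l) :=
    (ht.strictMonoOn i).monotoneOn.mono fun _ hj ↦ hj.2.trans hl
  refine StepBound.trans_iterate hkl hmono (by linarith [hA.nonneg]) hg fun j hj ↦ ?_
  have hjM : j < M i := hj.2.trans_le hl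
  have hkj : t i j ∈ Set.Icc (t i k) (t i l) :=
    hmono.mapsTo_Icc ⟨hj.1, hj.2.le⟩
  have hjl : t i (j + 1) ∈ Set.Icc (t i k) (t i l) :=
    hmono.mapsTo_Icc ⟨hj.1.trans (Nat.le_succ j), hj.2⟩
  have hgj := hg.mono_set
    (Set.uIcc_subset_uIcc (Set.Icc_subset_uIcc hkj) (Set.Icc_subset_uIcc hjl))
  have hAj := hA.mono (hq (j + 1) (by omega) hjM)
  exact hU.elim (fun h ↦ h.stepBound ht hjM hAj hgj) fun h ↦ h.stepBound ht hjM hAj hgj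

theorem lpNorm_le {p : ENNReal} [Fact (1 ≤ p)] {a b β : ℝ} (hU : IsGalerkin N T f u₀ M t q U)
    (ht : IsPartition N T M t) (hA : InverseEstimate qmax A)
    (hq : ∀ i j, 1 ≤ j → j ≤ M i → q i j ≤ qmax) (hf : Measurable (Function.uncurry f))
    (hab : a ≤ b) (ha : ∀ i, ∃ k ≤ M i, t i k = a) (hb : ∀ i, ∃ l ≤ M i, t i l = b)
    (hgrowth : ∀ s ∈ Set.Icc a b, ∀ x, _root_.lpNorm p (f x s) ≤ β * _root_.lpNorm p x)
    (hsmall : (b - a) * (2 * (1 + A)) * β ≤ 1) :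
    ∀ s ∈ Set.Icc a b,
      _root_.lpNorm p (U s) ≤ (1 + (b - a) * (2 * (1 + A)) * β) * _root_.lpNorm p (U a) := by
  let V : ℝ → PiLp p fun _ : Fin N ↦ ℝ := fun s ↦ WithLp.toLp p (U s)
  let G : ℝ → PiLp p fun _ : Fin N ↦ ℝ := fun s ↦ WithLp.toLp p (f (U s) s)
  have hUi (i : Fin N) : IntervalIntegrable (U · i) volume a b := by
    obtain ⟨k, hk, hka⟩ := ha i
    obtain ⟨l, hl, hlb⟩ := hb i
    exact (hU.intervalIntegrable ht i).mono_set <| Set.uIcc_subset_uIcc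
      (Set.Icc_subset_uIcc (hka ▸ ht.mem_Icc hk)) (Set.Icc_subset_uIcc (hlb ▸ ht.mem_Icc hl))
  have hV : IntegrableOn V (Set.Ioc a b) := Integrable.of_eval_piLp fun i ↦ (hUi i).1
  have hUmeas : AEMeasurable U (volume.restrict (Set.Ioc a b)) :=
    aemeasurable_pi_iff.2 fun i ↦ (hUi i).1.aemeasurable
  have hG : IntegrableOn G (Set.Ioc a b) :=
    (hV.norm.const_mul β).mono'
      ((WithLp.measurable_toLp p _).comp_aemeasurable
        (hf.comp_aemeasurable (hUmeas.prodMk aemeasurable_id))).aestronglyMeasurable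
      (ae_restrict_of_forall_mem measurableSet_Ioc fun s hs ↦
        hgrowth s (Set.Ioc_subset_Icc_self hs) (U s))
  have hG' := (intervalIntegrable_iff_integrableOn_Ioc_of_le hab).2 hG
  refine norm_le_of_stepBound (V := V) (G := G) hab (add_nonneg zero_le_one hA.nonneg)
    ((intervalIntegrable_iff_integrableOn_Ioc_of_le hab).2 hV) hG'
    (fun s hs ↦ hgrowth s hs (U s)) (fun i ↦ ?_) hsmall
  obtain ⟨k, hk, rfl⟩ := ha i
  obtain ⟨l, hl, rfl⟩ := hb i
  exact hU.stepBound ht hA (hq i) hl (((ht.strictMonoOn i).le_iff_le hk hl).1 hab)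
    ((intervalIntegrable_iff_integrableOn_Ioc_of_le hab).2 (hG.eval_piLp i))

end IsGalerkin

end Galerkin

theorem stability_estimate_general (qmax : ℕ) :
    ∃ C : ℝ, 0 < C ∧
      ∀ (N : ℕ) (T : ℝ) (f : (Fin N → ℝ) → ℝ → Fin N → ℝ) (w₀ : Fin N → ℝ)
        (M : Fin N → ℕ) (t : Fin N → ℕ → ℝ) (q : Fin N → ℕ → ℕ)
        (Msl : ℕ) (Tlev : ℕ → ℝ) (p : ENNReal) (CB : ℕ → ℝ) (W : ℝ → Fin N → ℝ),
        IsPartition N T M t →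
        (∀ (i : Fin N) (j : ℕ), 1 ≤ j → j ≤ M i → q i j ≤ qmax) →
        Tlev 0 = 0 → Tlev Msl = T →
        (∀ n : ℕ, 1 ≤ n → n ≤ Msl → Tlev (n - 1) < Tlev n) →
        (∀ (i : Fin N) (j : ℕ), 1 ≤ j → j ≤ M i →
          ∃ n : ℕ, 1 ≤ n ∧ n ≤ Msl ∧ Tlev (n - 1) ≤ t i (j - 1) ∧ t i j ≤ Tlev n) →
        1 ≤ p →
        Measurable (Function.uncurry f) →
        IsGalerkin N T f w₀ M t q W →
        (∀ n : ℕ, 1 ≤ n → n ≤ Msl → ∀ s ∈ Set.Icc (Tlev (n - 1)) (Tlev n),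
          ∀ x : Fin N → ℝ, lpNorm p (f x s) ≤ CB n * lpNorm p x) →
        (∀ n : ℕ, 1 ≤ n → n ≤ Msl → (Tlev n - Tlev (n - 1)) * C * CB n ≤ 1) →
        ∀ n : ℕ, 1 ≤ n → n ≤ Msl → ∀ s ∈ Set.Icc (Tlev (n - 1)) (Tlev n),
          lpNorm p (W s) ≤ C * lpNorm p w₀ *
            Real.exp (∑ m ∈ Finset.Icc 1 (n - 1), (Tlev m - Tlev (m - 1)) * C * CB m) := by
  obtain ⟨A, hA⟩ := exists_inverseEstimate qmax
  have hA0 : 0 ≤ A := hA.nonneg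
  refine ⟨2 * (1 + A), by positivity, ?_⟩
  intro N T f w₀ M t q Msl Tlev p CB W ht hq hT0 hTM hTlev hsync hp hf hW hgrowth hsmall
  have : Fact (1 ≤ p) := ⟨hp⟩
  have hnonneg (x : Fin N → ℝ) : 0 ≤ _root_.lpNorm p x := norm_nonneg _
  have hmono := (strictMonoOn_Iic_of_sub_one_lt hTlev).monotoneOn
  have hnode (n) (hn : n ≤ Msl) (i : Fin N) : ∃ k ≤ M i, t i k = Tlev n := by
    obtain ⟨-, h0, hT, -⟩ := ht i
    refine exists_node_eq hmono hn ?_ ?_ (hsync i)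
    · rw [h0, ← hT0]; exact hmono (Nat.zero_le _) hn (Nat.zero_le n)
    · rw [hT, ← hTM]; exact hmono hn Set.self_mem_Iic hn
  have hslab (n) (hn : n < Msl) := hW.lpNorm_le ht hA hq hf
    (hTlev (n + 1) (by omega) hn).le (hnode n hn.le) (hnode (n + 1) hn)
    (hgrowth (n + 1) (by omega) hn) (hsmall (n + 1) (by omega) hn)
  have hlevel := le_mul_exp_sum_of_le_one_add_mul (v := fun n ↦ _root_.lpNorm p (W (Tlev n)))
    (κ := fun m ↦ (Tlev m - Tlev (m - 1)) * (2 * (1 + A)) * CB m) (fun _ _ ↦ hnonneg _)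
    fun n hn ↦ hslab n hn _ (Set.right_mem_Icc.2 (hTlev (n + 1) (by omega) hn).le)
  simp only [hT0, hW.apply_zero] at hlevel
  intro n hn hnL s hs
  obtain ⟨n, rfl⟩ := Nat.exists_eq_add_of_le' hn
  have hstep : (Tlev (n + 1) - Tlev n) * (2 * (1 + A)) * CB (n + 1) ≤ 1 := hsmall (n + 1) hn hnL
  calc lpNorm p (W s)
      ≤ (1 + (Tlev (n + 1) - Tlev n) * (2 * (1 + A)) * CB (n + 1)) *
          _root_.lpNorm p (W (Tlev n)) := hslab n hnL s hs
    _ ≤ 2 * (1 + A) * _root_.lpNorm p (W (Tlev n)) :=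
        mul_le_mul_of_nonneg_right (by linarith) (hnonneg _)
    _ ≤ 2 * (1 + A) * (_root_.lpNorm p w₀ * Real.exp (∑ m ∈ Finset.Icc 1 n,
          (Tlev m - Tlev (m - 1)) * (2 * (1 + A)) * CB m)) := by
        gcongr; exact hlevel n (by omega)
    _ = _ := (mul_assoc _ _ _).symm

/-- Stability estimate (Theorem 4.2): let `W` be the mcG(q) or mdG(q) solution of the
linear problem `ẇ + B w = 0`, `w 0 = w₀`, with `B` bounded and measurable. There is a
constant `C > 0`, depending only on the maximal local degree, such that if
`K_n · C · ‖B‖_{L∞([T_{n-1},T_n],l_p)} ≤ 1` for every time slab, then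
`‖W‖_{L∞([T_{n-1},T_n],l_p)} ≤ C ‖w₀‖_{l_p} exp(∑_{m=1}^{n-1} K_m C ‖B‖_{L∞([T_{m-1},T_m],l_p)})`,
where `CB n` is any upper bound for the `l_p` operator norm of `B` on the `n`-th slab. -/
theorem stability_estimate (qmax : ℕ) :
    ∃ C : ℝ, 0 < C ∧
      ∀ (N : ℕ) (T : ℝ) (B : ℝ → Fin N → Fin N → ℝ) (w₀ : Fin N → ℝ)
        (M : Fin N → ℕ) (t : Fin N → ℕ → ℝ) (q : Fin N → ℕ → ℕ)
        (Msl : ℕ) (Tlev : ℕ → ℝ) (p : ENNReal) (CB : ℕ → ℝ) (W : ℝ → Fin N → ℝ),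
        0 < T → IsPartition N T M t →
        (∀ (i : Fin N) (j : ℕ), 1 ≤ j → j ≤ M i → q i j ≤ qmax) →
        1 ≤ Msl → Tlev 0 = 0 → Tlev Msl = T →
        (∀ n : ℕ, 1 ≤ n → n ≤ Msl → Tlev (n - 1) < Tlev n) →
        (∀ (i : Fin N) (j : ℕ), 1 ≤ j → j ≤ M i →
          ∃ n : ℕ, 1 ≤ n ∧ n ≤ Msl ∧ Tlev (n - 1) ≤ t i (j - 1) ∧ t i j ≤ Tlev n) →
        1 ≤ p →
        -- B is bounded and measurable
        Measurable B →
        (∃ c : ℝ, ∀ (s : ℝ) (i l : Fin N), |B s i l| ≤ c) →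
        -- W is the mcG(q) or mdG(q) solution with f(x,s) = -B(s)x
        (IsMcG N T (fun x s i => -∑ l, B s i l * x l) w₀ M t q W ∨
         IsMdG N T (fun x s i => -∑ l, B s i l * x l) w₀ M t q W) →
        -- CB n bounds the l_p operator norm of B on the n-th time slab
        (∀ n : ℕ, 1 ≤ n → n ≤ Msl → ∀ s ∈ Set.Icc (Tlev (n - 1)) (Tlev n),
          ∀ w : Fin N → ℝ, lpNorm p (fun i => ∑ l, B s i l * w l) ≤ CB n * lpNorm p w) →
        -- K_n C ‖B‖ ≤ 1 on every slab
        (∀ n : ℕ, 1 ≤ n → n ≤ Msl → (Tlev n - Tlev (n - 1)) * C * CB n ≤ 1) →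
        ∀ n : ℕ, 1 ≤ n → n ≤ Msl → ∀ s ∈ Set.Icc (Tlev (n - 1)) (Tlev n),
          lpNorm p (W s) ≤ C * lpNorm p w₀ *
            Real.exp (∑ m ∈ Finset.Icc 1 (n - 1), (Tlev m - Tlev (m - 1)) * C * CB m) := by
  obtain ⟨C, hC, hstab⟩ := stability_estimate_general qmax
  refine ⟨C, hC, fun N T B w₀ M t q Msl Tlev p CB W _ ht hq _ hT0 hTM hTlev hsync hp hB _ hW hCB ↦
    hstab N T _ w₀ M t q Msl Tlev p CB W ht hq hT0 hTM hTlev hsync hp (by fun_prop) hW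
      fun n hn hnL s hs x ↦ ?_⟩
  have : Fact (1 ≤ p) := ⟨hp⟩
  exact (norm_neg (WithLp.toLp p fun i ↦ ∑ l, B s i l * x l)).trans_le (hCB n hn hnL s hs x)
end
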